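/- Let q ≥ 1 and set β = 1/(q+2). There exists a constant C ≥ 1, depending only on q, such that for every κ ∈ (0,1), every solution ρ of the circular advection–diffusion equation with initial datum ρ₀(x,y) = φ(√(x²+y²) − 3κ^β) · y/√(x²+y²) (where φ(s) = (κ^β − |s|)/κ^β for |s| ≤ κ^β and φ(s) = 0 otherwise; ρ₀ vanishes in a neighborhood of the origin since its support lies in 2κ^β ≤ √(x²+y²) ≤ 4κ^β) satisfies, for all 0 ≤ t < κ^{−q/(q+2)}/4, κ ∫₀ᵗ ‖∇ρ(s)‖²_{L²} ds ≤ C ‖ρ₀‖²_{L²} [ (κ^{q/(q+2)} t)^{1/2} + κ^{q/(q+2)} t · |ln( (25 − 4κ^{q/(q+2)} t)/(1 − 4κ^{q/(q+2)} t) )| + |ln( 1 − 4κ^{q/(q+2)} t/25 )| ]. -/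

import Mathlib

/-!
Write `ε = κ^{1/(q+2)}`, so that `κ = ε^{q+2}`, and `f = ρ₀`. The first term on the right-hand
side of the theorem is enough: since `τ = ε^q t < 1/4`, one has `τ ≤ √τ`, and it suffices to show
`κ ∫₀ᵗ ‖∇ρ‖² ≤ C ‖f‖² τ`. If `s ↦ ‖∇ρ(s)‖²` is not integrable on `[0, t]`, the left-hand side is
`0` by convention; so let it be integrable.

The idea is to follow `∫ (ρ(s) - f)²`, which vanishes at `s = 0` and is never negative. Its time
derivative is `2 ∫ (ρ - f) (κ Δρ - v·∇ρ)`. The diffusion tested against `ρ` gives `-2κ‖∇ρ‖²`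
(`Slice.diffusion`), and the advection tested against `ρ` gives `0` (`Slice.advection`). Tested
against `f`, which is `2/ε`-Lipschitz, bounded by `1` and supported in `r ≤ 4ε` (`TestFn`), both
terms are absorbed by Young's inequality: half of the dissipation pays for them up to the constants
`1600 κ` (`TestFn.test_bound`) and `2 · 16^{q+1} ε^q ‖f‖²` (`Slice.energy`). As `‖f‖² ≥ ε²/64`
(`datum_l2_lower`), both are at most a multiple of `ε^q ‖f‖²`, and integration in time concludes.

The decay of the solution at infinity is not uniform in time, so neither the differentiation under
the integral nor the continuity at `s = 0` is available on the whole plane. The distance is therefore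
localized by a radial cutoff `chi n` (`dist2`). Being radial, it does not interfere with the
advection. It lives on the scale of `log (1 + r²)`, so `|∇χ|²` is bounded by the weight of the
logarithmic Hardy inequality (`chid_bound`, `Slice.hardy`). Hence the cutoff error `farErr` is
dominated by `‖∇ρ‖²` plus a constant, uniformly in `n`, and tends to `0` after integration in time
by dominated convergence (`tendsto_integral_farErr`).
-/

open MeasureTheory Real Set Filter

noncomputable section

/-- A function `f : ℝ² → ℝ` decays rapidly at infinity. -/
def HasRapidDecay (f : ℝ → ℝ → ℝ) : Prop :=
  ∀ k : ℕ, ∃ C : ℝ, ∀ x y : ℝ, (1 + x ^ 2 + y ^ 2) ^ k * |f x y| ≤ C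

/-- `ρ : ℝ → ℝ → ℝ → ℝ`, as `ρ t x y`, is a solution of the circular advection–diffusion
equation `∂ₜρ + (x²+y²)^{q/2}(-y ∂ₓρ + x ∂ᵧρ) = κ Δρ` on `[0,∞) × ℝ²`, continuous up to
`t = 0`, C¹ in time and C² in space for `t > 0`, with rapid decay of `ρ(t)` and its first
two spatial derivatives. -/
structure IsCircularSolution (q κ : ℝ) (ρ : ℝ → ℝ → ℝ → ℝ) : Prop where
  cont : ContinuousOn (fun p : ℝ × ℝ × ℝ => ρ p.1 p.2.1 p.2.2) {p : ℝ × ℝ × ℝ | 0 ≤ p.1}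
  diff_t : ∀ t, 0 < t → ∀ x y, DifferentiableAt ℝ (fun s => ρ s x y) t
  diff_x : ∀ t, 0 < t → ∀ x y, DifferentiableAt ℝ (fun a => ρ t a y) x
  diff_xx : ∀ t, 0 < t → ∀ x y, DifferentiableAt ℝ (fun a => deriv (fun b => ρ t b y) a) x
  diff_y : ∀ t, 0 < t → ∀ x y, DifferentiableAt ℝ (fun b => ρ t x b) y
  diff_yy : ∀ t, 0 < t → ∀ x y, DifferentiableAt ℝ (fun b => deriv (fun c => ρ t x c) b) y
  cont_dt : ContinuousOn (fun p : ℝ × ℝ × ℝ => deriv (fun s => ρ s p.2.1 p.2.2) p.1)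
      {p : ℝ × ℝ × ℝ | 0 < p.1}
  cont_dxx : ContinuousOn
      (fun p : ℝ × ℝ × ℝ => deriv (fun a => deriv (fun b => ρ p.1 b p.2.2) a) p.2.1)
      {p : ℝ × ℝ × ℝ | 0 < p.1}
  cont_dyy : ContinuousOn
      (fun p : ℝ × ℝ × ℝ => deriv (fun b => deriv (fun c => ρ p.1 p.2.1 c) b) p.2.2)
      {p : ℝ × ℝ × ℝ | 0 < p.1}
  decay : ∀ t, 0 ≤ t → HasRapidDecay (fun x y => ρ t x y)
  decay_dx : ∀ t, 0 < t → HasRapidDecay (fun x y => deriv (fun a => ρ t a y) x)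
  decay_dy : ∀ t, 0 < t → HasRapidDecay (fun x y => deriv (fun b => ρ t x b) y)
  decay_dxx : ∀ t, 0 < t →
    HasRapidDecay (fun x y => deriv (fun a => deriv (fun b => ρ t b y) a) x)
  decay_dyy : ∀ t, 0 < t →
    HasRapidDecay (fun x y => deriv (fun b => deriv (fun c => ρ t x c) b) y)
  pde : ∀ t, 0 < t → ∀ x y,
    deriv (fun s => ρ s x y) t + (x ^ 2 + y ^ 2) ^ (q / 2) *
        (-y * deriv (fun a => ρ t a y) x + x * deriv (fun b => ρ t x b) y) =
      κ * (deriv (fun a => deriv (fun b => ρ t b y) a) x +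
        deriv (fun b => deriv (fun c => ρ t x c) b) y)

/-- The squared `L²(ℝ²)` norm of `ρ(t)`. -/
def l2planeSq (ρ : ℝ → ℝ → ℝ → ℝ) (t : ℝ) : ℝ :=
  ∫ p : ℝ × ℝ, (ρ t p.1 p.2) ^ 2

/-- The squared `L²(ℝ²)` norm of the full spatial gradient of `ρ(t)`. -/
def gradPlaneNormSq (ρ : ℝ → ℝ → ℝ → ℝ) (t : ℝ) : ℝ :=
  ∫ p : ℝ × ℝ,
    ((deriv (fun a => ρ t a p.2) p.1) ^ 2 + (deriv (fun b => ρ t p.1 b) p.2) ^ 2)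

/-- The tent function of height 1 and half-width `h`: `(h - |s|)/h` for `|s| ≤ h`,
`0` otherwise. -/
def tentLine (h : ℝ) (s : ℝ) : ℝ := if |s| ≤ h then (h - |s|) / h else 0

namespace CircularFlow

/-! ### Rapid decay, polynomial growth and integrability on the plane -/

/-- The squared Euclidean radius `x² + y²`. -/
def rsq (p : ℝ × ℝ) : ℝ := p.1 ^ 2 + p.2 ^ 2

/-- Uncurried form of `HasRapidDecay`. -/
def RD (f : ℝ × ℝ → ℝ) : Prop :=
  ∀ k : ℕ, ∃ C : ℝ, ∀ p, (1 + rsq p) ^ k * |f p| ≤ C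

/-- At most polynomial growth at infinity. -/
def PG (f : ℝ × ℝ → ℝ) : Prop :=
  ∃ C : ℝ, ∃ k : ℕ, ∀ p, |f p| ≤ C * (1 + rsq p) ^ k

lemma rsq_nonneg (p : ℝ × ℝ) : 0 ≤ rsq p := by unfold rsq; positivity

lemma one_le_one_add_rsq (p : ℝ × ℝ) : 1 ≤ 1 + rsq p := by linarith [rsq_nonneg p]

@[fun_prop]
lemma continuous_rsq : Continuous rsq := by unfold rsq; fun_prop

@[fun_prop]
lemma measurable_rsq : Measurable rsq := continuous_rsq.measurable

lemma RD.mul_pg {f g : ℝ × ℝ → ℝ} (hf : RD f) (hg : PG g) : RD (fun p => f p * g p) := by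
  obtain ⟨C, m, hC⟩ := hg
  intro k
  obtain ⟨D, hD⟩ := hf (k + m)
  refine ⟨D * |C|, fun p => ?_⟩
  have h1 := one_le_one_add_rsq p
  have h2 : |g p| ≤ |C| * (1 + rsq p) ^ m :=
    (hC p).trans (mul_le_mul_of_nonneg_right (le_abs_self C) (by positivity))
  rw [abs_mul]
  calc (1 + rsq p) ^ k * (|f p| * |g p|)
      ≤ (1 + rsq p) ^ k * (|f p| * (|C| * (1 + rsq p) ^ m)) := by gcongr
    _ = ((1 + rsq p) ^ (k + m) * |f p|) * |C| := by ring
    _ ≤ D * |C| := mul_le_mul_of_nonneg_right (hD p) (abs_nonneg C)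

lemma RD.pg {f : ℝ × ℝ → ℝ} (hf : RD f) : PG f := by
  obtain ⟨D, hD⟩ := hf 0
  exact ⟨D, 0, fun p => by simpa using hD p⟩

lemma RD.mul {f g : ℝ × ℝ → ℝ} (hf : RD f) (hg : RD g) : RD (fun p => f p * g p) :=
  hf.mul_pg hg.pg

lemma RD.pg_mul {f g : ℝ × ℝ → ℝ} (hf : PG f) (hg : RD g) : RD (fun p => f p * g p) := by
  simpa [mul_comm] using hg.mul_pg hf

lemma PG.mul {f g : ℝ × ℝ → ℝ} (hf : PG f) (hg : PG g) : PG (fun p => f p * g p) := by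
  obtain ⟨C, m, hC⟩ := hf
  obtain ⟨D, k, hD⟩ := hg
  refine ⟨C * D, m + k, fun p => ?_⟩
  rw [abs_mul]
  have h1 := one_le_one_add_rsq p
  calc |f p| * |g p| ≤ (C * (1 + rsq p) ^ m) * (D * (1 + rsq p) ^ k) :=
        mul_le_mul (hC p) (hD p) (abs_nonneg _) ((abs_nonneg _).trans (hC p))
    _ = _ := by ring

lemma PG.of_bdd {f : ℝ × ℝ → ℝ} {C : ℝ} (h : ∀ p, |f p| ≤ C) : PG f :=
  ⟨C, 0, fun p => by simpa using h p⟩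

lemma PG.fst : PG (fun p => p.1) := by
  refine ⟨1, 1, fun p => abs_le_of_sq_le_sq ?_ ?_⟩ <;>
  · have := rsq_nonneg p
    unfold rsq at *
    nlinarith [sq_nonneg p.1, sq_nonneg p.2, sq_nonneg (p.1 ^ 2 + p.2 ^ 2)]

lemma PG.snd : PG (fun p => p.2) := by
  refine ⟨1, 1, fun p => abs_le_of_sq_le_sq ?_ ?_⟩ <;>
  · have := rsq_nonneg p
    unfold rsq at *
    nlinarith [sq_nonneg p.1, sq_nonneg p.2, sq_nonneg (p.1 ^ 2 + p.2 ^ 2)]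

lemma PG.neg {f : ℝ × ℝ → ℝ} (hf : PG f) : PG (fun p => - f p) := by
  simpa [PG] using hf

lemma rpow_le_pow_ceil {a : ℝ} (ha : 0 ≤ a) (p : ℝ × ℝ) :
    rsq p ^ a ≤ (1 + rsq p) ^ (⌈a⌉₊) := by
  have h0 := rsq_nonneg p
  calc rsq p ^ a ≤ (1 + rsq p) ^ a := Real.rpow_le_rpow h0 (by linarith) ha
    _ ≤ (1 + rsq p) ^ ((⌈a⌉₊ : ℕ) : ℝ) :=
        Real.rpow_le_rpow_of_exponent_le (by linarith) (Nat.le_ceil a)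
    _ = _ := Real.rpow_natCast _ _

lemma PG.rpow {a : ℝ} (ha : 0 ≤ a) : PG (fun p => rsq p ^ a) := by
  refine ⟨1, ⌈a⌉₊, fun p => ?_⟩
  rw [abs_of_nonneg (Real.rpow_nonneg (rsq_nonneg p) a), one_mul]
  exact rpow_le_pow_ceil ha p

lemma RD.integrable {f : ℝ × ℝ → ℝ} (hf : RD f) (hm : Measurable f) : Integrable f := by
  obtain ⟨C, hC⟩ := hf 2
  have hi : Integrable (fun p : ℝ × ℝ => C * ((1 + p.1 ^ 2)⁻¹ * (1 + p.2 ^ 2)⁻¹)) :=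
    (integrable_inv_one_add_sq.mul_prod integrable_inv_one_add_sq).const_mul C
  refine hi.mono' hm.aestronglyMeasurable (Eventually.of_forall fun p => ?_)
  have h1 : 0 < 1 + p.1 ^ 2 := by positivity
  have h2 : 0 < 1 + p.2 ^ 2 := by positivity
  have h3 : (1 + p.1 ^ 2) * (1 + p.2 ^ 2) ≤ (1 + rsq p) ^ 2 := by
    unfold rsq; nlinarith [sq_nonneg p.1, sq_nonneg p.2, sq_nonneg (p.1 * p.2)]
  rw [← mul_inv, ← div_eq_mul_inv, le_div_iff₀ (by positivity), Real.norm_eq_abs, mul_comm]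
  exact (mul_le_mul_of_nonneg_right h3 (abs_nonneg _)).trans (hC p)

/-! ### Directional derivatives and integration by parts -/

/-- `f'` is the derivative of `f` in the direction `v`, at every point. -/
def DirD (v : ℝ × ℝ) (f f' : ℝ × ℝ → ℝ) : Prop := ∀ p, HasLineDerivAt ℝ f (f' p) p v

lemma DirD.mul {v : ℝ × ℝ} {f f' g g' : ℝ × ℝ → ℝ} (hf : DirD v f f') (hg : DirD v g g') :
    DirD v (fun p => f p * g p) (fun p => f' p * g p + f p * g' p) := by
  intro p
  have h := HasDerivAt.mul (hf p) (hg p)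
  simp only [zero_smul, add_zero] at h
  exact h

lemma DirD.sq {v : ℝ × ℝ} {f f' : ℝ × ℝ → ℝ} (hf : DirD v f f') :
    DirD v (fun p => f p ^ 2) (fun p => 2 * f p * f' p) := by
  intro p
  have h := hf.mul hf p
  convert h using 1
  · ext p; ring
  · ring

lemma dirD_rsq (v : ℝ × ℝ) : DirD v rsq (fun p => 2 * (p.1 * v.1 + p.2 * v.2)) := by
  intro p
  have h1 : HasDerivAt (fun t : ℝ => p.1 + t * v.1) v.1 0 := by
    simpa using ((hasDerivAt_id (0 : ℝ)).mul_const v.1).const_add p.1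
  have h2 : HasDerivAt (fun t : ℝ => p.2 + t * v.2) v.2 0 := by
    simpa using ((hasDerivAt_id (0 : ℝ)).mul_const v.2).const_add p.2
  have h := (h1.pow 2).add (h2.pow 2)
  have h' : HasDerivAt (fun t : ℝ => rsq (p + t • v))
      ((2 : ℕ) * (p.1 + 0 * v.1) ^ (2 - 1) * v.1 + (2 : ℕ) * (p.2 + 0 * v.2) ^ (2 - 1) * v.2) 0 := h
  exact h'.congr_deriv (by simp; ring)

/-- Chain rule for a radial function `φ(x² + y²)`. -/
lemma DirD.radial {v : ℝ × ℝ} {φ φ' : ℝ → ℝ} {p : ℝ × ℝ}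
    (h : HasDerivAt φ (φ' (rsq p)) (rsq p)) :
    HasLineDerivAt ℝ (fun p => φ (rsq p)) (φ' (rsq p) * (2 * (p.1 * v.1 + p.2 * v.2))) p v := by
  have h' : HasDerivAt φ (φ' (rsq p)) (rsq (p + (0 : ℝ) • v)) := by simpa using h
  exact HasDerivAt.comp (0 : ℝ) h' (dirD_rsq v p)

lemma ibp {v : ℝ × ℝ} {f f' g g' : ℝ × ℝ → ℝ} (hf : DirD v f f') (hg : DirD v g g')
    (h1 : Integrable (fun p => f' p * g p)) (h2 : Integrable (fun p => f p * g' p))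
    (h3 : Integrable (fun p => f p * g p)) :
    ∫ p, f p * g' p = - ∫ p, f' p * g p := by
  exact integral_bilinear_hasLineDerivAt_right_eq_neg_left_of_integrable
    (B := ContinuousLinearMap.mul ℝ ℝ) h1 h2 h3 (fun x _ => hf x) (fun x _ => hg x)

/-- Integration by parts against a test function `f` that is only Lipschitz near a set `S`
carrying all its increments: `|∫ f ∂ᵥg| ≤ L ∫_S |g|`. The difference quotient is moved from
`g` to `f` by translation invariance. -/
lemma lipschitz_ibp {v : ℝ × ℝ} {f g g' : ℝ × ℝ → ℝ} {L M δ : ℝ} {S : Set (ℝ × ℝ)}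
    (hδ : 0 < δ) (hS : MeasurableSet S)
    (hfi : Integrable f) (hfb : ∃ B, ∀ p, |f p| ≤ B)
    (hLip : ∀ p, ∀ h : ℝ, |h| ≤ δ → |f (p + h • v) - f p| ≤ L * |h| * S.indicator 1 p)
    (hg : DirD v g g') (hgi : Integrable g) (hM : ∀ p, |g' p| ≤ M) :
    |∫ p, f p * g' p| ≤ ∫ p, L * S.indicator 1 p * |g p| := by
  obtain ⟨B, hB⟩ := hfb
  let h : ℕ → ℝ := fun n => δ / (n + 1)
  have hpos : ∀ n, 0 < h n := fun n => by positivity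
  have hle : ∀ n, h n ≤ δ := fun n => by
    apply div_le_self hδ.le; linarith [(Nat.cast_nonneg n : (0:ℝ) ≤ n)]
  have hlim : Tendsto h atTop (nhds 0) := by
    have := (tendsto_one_div_add_atTop_nhds_zero_nat (𝕜 := ℝ)).const_mul δ
    simpa [h, div_eq_mul_inv] using this
  have hgm : ∀ a : ℝ × ℝ, Integrable (fun p => g (p + a)) := fun a => hgi.comp_add_right a
  have hfg : ∀ a : ℝ × ℝ, Integrable (fun p => f p * g (p + a)) := fun a =>
    (hgm a).bdd_mul hfi.aestronglyMeasurable (Eventually.of_forall hB)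
  have hfg2 : ∀ a : ℝ × ℝ, Integrable (fun p => f (p + a) * g p) := fun a =>
    hgi.bdd_mul (hfi.comp_add_right a).aestronglyMeasurable
      (Eventually.of_forall fun p => hB (p + a))
  have hfg0 : Integrable (fun p => f p * g p) := by simpa using hfg 0
  have hquot : ∀ p, ∀ t : ℝ, 0 < t → |(g (p + t • v) - g p) / t| ≤ M := by
    intro p t ht
    have hd : ∀ s : ℝ, HasDerivAt (fun s : ℝ => g (p + s • v)) (g' (p + s • v)) s := by
      intro s
      have h1 := hg (p + s • v)
      have h2 : HasDerivAt (fun r : ℝ => g ((p + s • v) + r • v)) (g' (p + s • v)) (s - s) := by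
        simpa [HasLineDerivAt] using h1
      have h3 := HasDerivAt.comp (h := fun r : ℝ => r - s) s h2 ((hasDerivAt_id s).sub_const s)
      have e : (fun s : ℝ => g (p + s • v))
          = (fun r : ℝ => g (p + s • v + r • v)) ∘ fun r : ℝ => r - s := by
        funext r
        change g (p + r • v) = g (p + s • v + (r - s) • v)
        rw [add_assoc, ← add_smul, add_sub_cancel]
      rw [e]
      exact h3.congr_deriv (mul_one _)
    have := Convex.norm_image_sub_le_of_norm_hasDerivWithin_le (C := M) (s := Set.univ)
      (fun s _ => (hd s).hasDerivWithinAt) (fun s _ => hM _) convex_univ (mem_univ 0) (mem_univ t)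
    simp only [zero_smul, add_zero, Real.norm_eq_abs, sub_zero] at this
    rw [abs_div, abs_of_pos ht, div_le_iff₀ ht]
    rwa [abs_of_pos ht] at this
  have hT : Tendsto (fun n => ∫ p, f p * ((g (p + h n • v) - g p) / h n)) atTop
      (nhds (∫ p, f p * g' p)) := by
    refine tendsto_integral_of_dominated_convergence (fun p => |f p| * M) ?_
      (hfi.abs.mul_const M) ?_ ?_
    · intro n
      exact hfi.aestronglyMeasurable.mul
        (((((hgm _).sub hgi).div_const _)).aestronglyMeasurable)
    · intro n
      refine Eventually.of_forall fun p => ?_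
      rw [Real.norm_eq_abs, abs_mul]
      exact mul_le_mul_of_nonneg_left (hquot p _ (hpos n)) (abs_nonneg _)
    · refine Eventually.of_forall fun p => Tendsto.const_mul _ ?_
      have h1 : HasDerivAt (fun s : ℝ => g (p + s • v)) (g' p) 0 := hg p
      have h2 := h1.tendsto_slope_zero
      have h3 : Tendsto h atTop (nhdsWithin 0 {0}ᶜ) :=
        tendsto_nhdsWithin_iff.2 ⟨hlim, Eventually.of_forall fun n => (hpos n).ne'⟩
      have h4 := h2.comp h3
      simpa [Function.comp_def, div_eq_inv_mul] using h4
  refine le_of_tendsto hT.abs (Eventually.of_forall fun n => ?_)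
  have hint : Integrable (fun p => L * S.indicator 1 p * |g p|) := by
    have : (fun p => L * S.indicator 1 p * |g p|) = fun p => L * S.indicator (fun p => |g p|) p := by
      ext p; by_cases hp : p ∈ S <;> simp [hp]
    rw [this]
    exact (hgi.abs.indicator hS).const_mul L
  have key : ∫ p, f p * ((g (p + h n • v) - g p) / h n)
      = ∫ p, (f (p + (-h n) • v) - f p) / h n * g p := by
    have e1 : ∫ p, f p * g (p + h n • v) = ∫ p, f (p + (-h n) • v) * g p := by
      rw [← integral_add_right_eq_self (fun p => f (p + (-h n) • v) * g p) (h n • v)]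
      congr 1; ext p
      rw [add_assoc, ← add_smul]; simp
    have e2 : ∀ p, f p * ((g (p + h n • v) - g p) / h n)
        = (f p * g (p + h n • v) - f p * g p) / h n := fun p => by ring
    have e3 : ∀ p, (f (p + (-h n) • v) - f p) / h n * g p
        = (f (p + (-h n) • v) * g p - f p * g p) / h n := fun p => by ring
    simp_rw [e2, e3]
    rw [integral_div, integral_div, integral_sub (hfg _) hfg0, integral_sub (hfg2 _) hfg0, e1]
  rw [key, ← Real.norm_eq_abs]
  refine norm_integral_le_of_norm_le hint (Eventually.of_forall fun p => ?_)
  rw [Real.norm_eq_abs, abs_mul, abs_div, abs_of_pos (hpos n)]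
  refine mul_le_mul_of_nonneg_right ?_ (abs_nonneg _)
  rw [div_le_iff₀ (hpos n)]
  have := hLip p (-h n) (by rw [abs_neg, abs_of_pos (hpos n)]; exact hle n)
  rw [abs_neg, abs_of_pos (hpos n)] at this
  linarith

/-! ### The logarithmic cutoff -/

/-- `u ↦ max(0,u)²`, a `C¹` function used as a building block of the cutoff. -/
def psq (u : ℝ) : ℝ := (max 0 u) ^ 2

lemma hasDerivAt_psq (u : ℝ) : HasDerivAt psq (2 * max 0 u) u := by
  rcases lt_trichotomy u 0 with h | h | h
  · have e : psq =ᶠ[nhds u] fun _ => 0 := by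
      filter_upwards [Iio_mem_nhds h] with x hx
      simp [psq, max_eq_left (le_of_lt (mem_Iio.1 hx))]
    rw [max_eq_left h.le, mul_zero]
    exact (hasDerivAt_const u (0 : ℝ)).congr_of_eventuallyEq e
  · subst h
    rw [max_self, mul_zero, hasDerivAt_iff_isLittleO]
    have : (fun x : ℝ => psq x - psq 0 - (x - 0) • (0 : ℝ)) = fun x => psq x := by
      ext x; simp [psq]
    rw [this]
    have h2 : psq =O[nhds 0] fun x : ℝ => x ^ 2 := by
      refine Asymptotics.IsBigO.of_bound 1 (Eventually.of_forall fun x => ?_)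
      rw [Real.norm_eq_abs, Real.norm_eq_abs, psq, abs_of_nonneg (sq_nonneg _),
        abs_of_nonneg (sq_nonneg _), one_mul]
      rcases le_total x 0 with hx | hx
      · rw [max_eq_left hx]; nlinarith
      · rw [max_eq_right hx]
    refine h2.trans_isLittleO ?_
    simpa using (Asymptotics.isLittleO_pow_id (𝕜 := ℝ) (n := 2) (by norm_num))
  · have e : psq =ᶠ[nhds u] fun x => x ^ 2 := by
      filter_upwards [Ioi_mem_nhds h] with x hx
      simp [psq, max_eq_right (le_of_lt (mem_Ioi.1 hx))]
    rw [max_eq_right h.le]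
    exact ((hasDerivAt_pow 2 u).congr_of_eventuallyEq e).congr_deriv (by simp)

@[fun_prop]
lemma continuous_psq : Continuous psq := by unfold psq; fun_prop

/-- `log (1 + r²)`. -/
def ell (p : ℝ × ℝ) : ℝ := Real.log (1 + rsq p)

lemma ell_nonneg (p : ℝ × ℝ) : 0 ≤ ell p := Real.log_nonneg (one_le_one_add_rsq p)

@[fun_prop]
lemma continuous_ell : Continuous ell := by
  unfold ell
  exact Continuous.log (by fun_prop) (fun p => by linarith [rsq_nonneg p])

/-- The weight of the logarithmic Hardy inequality. -/
def wt (p : ℝ × ℝ) : ℝ := 1 / ((1 + rsq p) * (1 + ell p) ^ 2)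

@[fun_prop]
lemma continuous_wt : Continuous wt := by
  unfold wt
  refine Continuous.div (by fun_prop) (by fun_prop) fun p => ?_
  have := rsq_nonneg p; have := ell_nonneg p; positivity

lemma wt_nonneg (p : ℝ × ℝ) : 0 ≤ wt p := by
  have := rsq_nonneg p; unfold wt; positivity

lemma wt_le_one (p : ℝ × ℝ) : wt p ≤ 1 := by
  have := rsq_nonneg p; have := ell_nonneg p
  unfold wt
  rw [div_le_one (by positivity)]
  nlinarith [mul_nonneg (rsq_nonneg p) (sq_nonneg (1 + ell p))]

/-- Indicator of the far region `log (1 + r²) ≥ n`. -/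
def far (n : ℕ) (p : ℝ × ℝ) : ℝ := if (n : ℝ) ≤ ell p then 1 else 0

lemma far_nonneg (n : ℕ) (p : ℝ × ℝ) : 0 ≤ far n p := by unfold far; split_ifs <;> norm_num
lemma far_le_one (n : ℕ) (p : ℝ × ℝ) : far n p ≤ 1 := by unfold far; split_ifs <;> norm_num

@[fun_prop]
lemma measurable_far (n : ℕ) : Measurable (far n) := by
  unfold far
  exact Measurable.ite (measurableSet_le measurable_const continuous_ell.measurable)
    measurable_const measurable_const

/-- A radial `C¹` cutoff, equal to `1` for `log (1 + r²) ≤ n` and to `0` for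
`log (1 + r²) ≥ 2n`. Its slow logarithmic transition makes `|∇χ|²` comparable with `wt`. -/
def chi (n : ℕ) (p : ℝ × ℝ) : ℝ := psq (1 - psq (ell p / n - 1))

/-- The radial factor of `∇χ`: `∇χ(p) = chid n p • p`. -/
def chid (n : ℕ) (p : ℝ × ℝ) : ℝ :=
  2 * max 0 (1 - psq (ell p / n - 1)) * (-(2 * max 0 (ell p / n - 1) * (2 / (1 + rsq p) / n)))

@[fun_prop]
lemma continuous_chi (n : ℕ) : Continuous (chi n) := by unfold chi; fun_prop

@[fun_prop]
lemma continuous_chid (n : ℕ) : Continuous (chid n) := by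
  unfold chid
  have : Continuous fun p : ℝ × ℝ => 2 / (1 + rsq p) :=
    Continuous.div (by fun_prop) (by fun_prop) fun p => by linarith [rsq_nonneg p]
  fun_prop

lemma chi_nonneg (n : ℕ) (p : ℝ × ℝ) : 0 ≤ chi n p := sq_nonneg _

lemma chi_le_one (n : ℕ) (p : ℝ × ℝ) : chi n p ≤ 1 := by
  have h : 0 ≤ psq (ell p / n - 1) := sq_nonneg _
  unfold chi
  rw [psq]
  have h1 : max 0 (1 - psq (ell p / n - 1)) ≤ 1 := max_le (by norm_num) (by linarith)
  have h2 : 0 ≤ max 0 (1 - psq (ell p / n - 1)) := le_max_left _ _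
  nlinarith

lemma max_eq_zero_of_lt {n : ℕ} {p : ℝ × ℝ} (h : ell p ≤ n) : max 0 (ell p / n - 1) = 0 := by
  apply max_eq_left
  have := div_le_one_of_le₀ h (Nat.cast_nonneg n)
  linarith

lemma chi_eq_one {n : ℕ} {p : ℝ × ℝ} (h : ell p ≤ n) : chi n p = 1 := by
  simp [chi, psq, max_eq_zero_of_lt h]

lemma chid_eq_zero {n : ℕ} {p : ℝ × ℝ} (h : ell p ≤ n) : chid n p = 0 := by
  simp [chid, max_eq_zero_of_lt h]

lemma one_sub_psq_nonpos {n : ℕ} (hn : 1 ≤ n) {p : ℝ × ℝ} (h : 2 * (n : ℝ) ≤ ell p) :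
    1 - psq (ell p / n - 1) ≤ 0 := by
  have hn' : (0 : ℝ) < n := by exact_mod_cast hn
  have h1 : 1 ≤ ell p / n - 1 := by
    rw [le_sub_iff_add_le, le_div_iff₀ hn']; linarith
  rw [psq, max_eq_right (by linarith)]
  nlinarith

lemma chi_eq_zero {n : ℕ} (hn : 1 ≤ n) {p : ℝ × ℝ} (h : 2 * (n : ℝ) ≤ ell p) : chi n p = 0 := by
  rw [chi, psq, max_eq_left (one_sub_psq_nonpos hn h)]; norm_num

lemma one_sub_chi_le (n : ℕ) (p : ℝ × ℝ) : 1 - chi n p ≤ far n p := by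
  unfold far
  split_ifs with h
  · linarith [chi_nonneg n p]
  · rw [chi_eq_one (not_le.1 h).le]; norm_num

lemma chid_bound {n : ℕ} (hn : 1 ≤ n) (p : ℝ × ℝ) :
    chid n p ^ 2 * rsq p ≤ 1024 * wt p * far n p := by
  have hn' : (1 : ℝ) ≤ n := by exact_mod_cast hn
  have hs := rsq_nonneg p
  have hw := wt_nonneg p
  by_cases h : (n : ℝ) ≤ ell p
  swap
  · rw [chid_eq_zero (not_le.1 h).le]
    have := far_nonneg n p
    have : 0 ≤ 1024 * wt p * far n p := by positivity
    simpa using this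
  have hf : far n p = 1 := if_pos h
  by_cases h2 : 2 * (n : ℝ) ≤ ell p
  · have : chid n p = 0 := by rw [chid, max_eq_left (one_sub_psq_nonpos hn h2)]; ring
    rw [this, hf]; simpa using hw
  push Not at h2
  have hl : 1 ≤ ell p := hn'.trans h
  have hA0 : 0 ≤ max 0 (1 - psq (ell p / n - 1)) := le_max_left _ _
  have hA1 : max 0 (1 - psq (ell p / n - 1)) ≤ 1 := by
    have h : 0 ≤ psq (ell p / n - 1) := sq_nonneg _
    exact max_le (by norm_num) (by linarith)
  have hB0 : 0 ≤ max 0 (ell p / n - 1) := le_max_left _ _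
  have hB1 : max 0 (ell p / n - 1) ≤ 1 := by
    refine max_le (by norm_num) ?_
    rw [sub_le_iff_le_add, div_le_iff₀ (by linarith)]; linarith
  set A := max 0 (1 - psq (ell p / n - 1)) with hA
  set B := max 0 (ell p / n - 1) with hB
  have hAB : (A * B) ^ 2 ≤ 1 := by
    have h1 : A * B ≤ 1 := by nlinarith
    have h0 : 0 ≤ A * B := mul_nonneg hA0 hB0
    nlinarith
  have e : chid n p ^ 2 * rsq p = (A * B) ^ 2 * (64 * rsq p / ((1 + rsq p) ^ 2 * (n : ℝ) ^ 2)) := by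
    rw [chid, ← hA, ← hB]
    have : (n : ℝ) ≠ 0 := by positivity
    field_simp
    ring
  rw [e, hf, mul_one]
  have h3 : 64 * rsq p / ((1 + rsq p) ^ 2 * (n : ℝ) ^ 2) ≤ 1024 * wt p := by
    rw [wt, mul_one_div, div_le_div_iff₀ (by positivity) (by positivity)]
    -- `1 + ℓ ≤ 2ℓ ≤ 4n` on the transition region `n ≤ ℓ ≤ 2n`.
    have h4 : (1 + ell p) ^ 2 ≤ 16 * (n : ℝ) ^ 2 := by nlinarith
    calc 64 * rsq p * ((1 + rsq p) * (1 + ell p) ^ 2)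
        ≤ 64 * (1 + rsq p) * ((1 + rsq p) * (16 * (n : ℝ) ^ 2)) := by gcongr; linarith
      _ = _ := by ring
  calc (A * B) ^ 2 * (64 * rsq p / ((1 + rsq p) ^ 2 * (n : ℝ) ^ 2))
      ≤ 1 * (64 * rsq p / ((1 + rsq p) ^ 2 * (n : ℝ) ^ 2)) := by gcongr
    _ ≤ _ := by rw [one_mul]; exact h3

lemma dirD_chi (n : ℕ) (v : ℝ × ℝ) :
    DirD v (chi n) (fun p => chid n p * (p.1 * v.1 + p.2 * v.2)) := by
  intro p
  have h1 : HasDerivAt (fun s : ℝ => Real.log (1 + s)) (1 / (1 + rsq p)) (rsq p) := by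
    have h0 : HasDerivAt (fun s : ℝ => 1 + s) 1 (rsq p) := by
      simpa using (hasDerivAt_id (rsq p)).const_add 1
    exact h0.log (by linarith [rsq_nonneg p])
  have h2 : HasDerivAt (fun s : ℝ => Real.log (1 + s) / n - 1) (1 / (1 + rsq p) / n) (rsq p) :=
    (h1.div_const _).sub_const 1
  have h3 := HasDerivAt.comp (rsq p) (hasDerivAt_psq _) h2
  have h4 := HasDerivAt.comp (rsq p) (hasDerivAt_psq _) (h3.const_sub 1)
  have h5 := DirD.radial (v := v) (φ' := fun _ => _) h4
  refine HasDerivAt.congr_deriv (f := fun t : ℝ => chi n (p + t • v)) h5 ?_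
  simp only [chid, ell, Function.comp]
  ring

lemma pg_chi (n : ℕ) : PG (chi n) := PG.of_bdd (C := 1) fun p => by
  rw [abs_of_nonneg (chi_nonneg n p)]; exact chi_le_one n p

lemma pg_chid_mul {n : ℕ} (hn : 1 ≤ n) (v : ℝ × ℝ) :
    PG (fun p => chid n p * (p.1 * v.1 + p.2 * v.2)) := by
  refine PG.of_bdd (C := 32 * √(rsq v)) fun p => ?_
  have h1 := chid_bound hn p
  have h2 : 1024 * wt p * far n p ≤ 1024 := by
    nlinarith [wt_nonneg p, wt_le_one p, far_nonneg n p, far_le_one n p,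
      mul_le_one₀ (wt_le_one p) (far_nonneg n p) (far_le_one n p)]
  refine abs_le_of_sq_le_sq ?_ (by positivity)
  rw [mul_pow, mul_pow, Real.sq_sqrt (rsq_nonneg v)]
  have h3 : (p.1 * v.1 + p.2 * v.2) ^ 2 ≤ rsq p * rsq v := by
    unfold rsq; nlinarith [sq_nonneg (p.1 * v.2 - p.2 * v.1)]
  calc chid n p ^ 2 * (p.1 * v.1 + p.2 * v.2) ^ 2 ≤ chid n p ^ 2 * (rsq p * rsq v) := by gcongr
    _ = chid n p ^ 2 * rsq p * rsq v := by ring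
    _ ≤ 1024 * rsq v := mul_le_mul_of_nonneg_right (h1.trans h2) (rsq_nonneg v)
    _ = _ := by norm_num

/-! ### Estimates on a fixed time slice -/

/-- A time slice of a solution: a function `u` on the plane with first and pure second
derivatives, all rapidly decaying. -/
structure Slice (u ux uy uxx uyy : ℝ × ℝ → ℝ) : Prop where
  mu : Measurable u
  mx : Measurable ux
  my : Measurable uy
  mxx : Measurable uxx
  myy : Measurable uyy
  dx : DirD (1, 0) u ux
  dy : DirD (0, 1) u uy
  dxx : DirD (1, 0) ux uxx
  dyy : DirD (0, 1) uy uyy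
  ru : RD u
  rx : RD ux
  ry : RD uy
  rxx : RD uxx
  ryy : RD uyy

/-- The profile `f` of the Hardy vector field `V(p) = -f(p) p`. -/
def hprof (p : ℝ × ℝ) : ℝ := 1 / ((1 + rsq p) * (1 + ell p))

/-- The derivative of `hprof` with respect to `r²`. -/
def hprofD (p : ℝ × ℝ) : ℝ := -(2 + ell p) / ((1 + rsq p) * (1 + ell p)) ^ 2

@[fun_prop]
lemma continuous_hprof : Continuous hprof := by
  unfold hprof
  refine Continuous.div (by fun_prop) (by fun_prop) fun p => ?_
  have := rsq_nonneg p; have := ell_nonneg p; positivity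

@[fun_prop]
lemma continuous_hprofD : Continuous hprofD := by
  unfold hprofD
  refine Continuous.div (by fun_prop) (by fun_prop) fun p => ?_
  have := rsq_nonneg p; have := ell_nonneg p; positivity

lemma pg_hprof : PG hprof := PG.of_bdd (C := 1) fun p => by
  have h1 := rsq_nonneg p; have h2 := ell_nonneg p
  unfold hprof
  rw [abs_of_nonneg (by positivity), div_le_one (by positivity)]
  nlinarith [mul_nonneg h1 h2]

lemma pg_hprofD : PG hprofD := PG.of_bdd (C := 2) fun p => by
  have h1 := rsq_nonneg p; have h2 := ell_nonneg p
  unfold hprofD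
  rw [abs_div, abs_neg, abs_of_nonneg (by positivity : (0:ℝ) ≤ 2 + ell p),
    abs_of_nonneg (by positivity), div_le_iff₀ (by positivity)]
  have h3 : 1 + ell p ≤ (1 + rsq p) * (1 + ell p) := by nlinarith [mul_nonneg h1 h2]
  have h4 : (1 + ell p) ^ 2 ≤ ((1 + rsq p) * (1 + ell p)) ^ 2 := by gcongr
  nlinarith

lemma dirD_hprof (v : ℝ × ℝ) : DirD v hprof (fun p => hprofD p * (2 * (p.1 * v.1 + p.2 * v.2))) := by
  intro p
  have h1 := rsq_nonneg p; have h2 := ell_nonneg p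
  have h0 : HasDerivAt (fun s : ℝ => 1 + s) 1 (rsq p) := by
    simpa using (hasDerivAt_id (rsq p)).const_add 1
  have hl : HasDerivAt (fun s : ℝ => 1 + Real.log (1 + s)) (1 / (1 + rsq p)) (rsq p) :=
    (h0.log (by linarith)).const_add 1
  have hp := h0.mul hl
  have hne : (1 + rsq p) * (1 + Real.log (1 + rsq p)) ≠ 0 := by
    change (1 + rsq p) * (1 + ell p) ≠ 0
    positivity
  have hi := (hasDerivAt_const (rsq p) (1 : ℝ)).div hp hne
  have h5 := DirD.radial (v := v) (φ' := fun _ => _) hi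
  refine HasDerivAt.congr_deriv (f := fun t : ℝ => hprof (p + t • v)) h5 ?_
  have h3 : 1 + rsq p ≠ 0 := by positivity
  have h4 : 1 + ell p ≠ 0 := by positivity
  simp only [hprofD, Pi.mul_apply]
  change (0 * ((1 + rsq p) * (1 + ell p)) - 1 * (1 * (1 + ell p) + (1 + rsq p) * (1 / (1 + rsq p))))
    / ((1 + rsq p) * (1 + ell p)) ^ 2 * _ = _
  rw [mul_one_div_cancel h3]
  ring

lemma dirD_fst : DirD (1, 0) (fun p => p.1) (fun _ => 1) := by
  intro p
  have h : HasDerivAt (fun t : ℝ => p.1 + t * 1) 1 0 := by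
    simpa using ((hasDerivAt_id (0 : ℝ)).const_add p.1)
  exact h

lemma dirD_snd : DirD (0, 1) (fun p => p.2) (fun _ => 1) := by
  intro p
  have h : HasDerivAt (fun t : ℝ => p.2 + t * 1) 1 0 := by
    simpa using ((hasDerivAt_id (0 : ℝ)).const_add p.2)
  exact h

lemma dirD_const_fst : DirD (0, 1) (fun p => p.1) (fun _ => 0) := by
  intro p
  have h : HasDerivAt (fun t : ℝ => p.1 + t * 0) 0 0 := by
    simpa using (hasDerivAt_const (0 : ℝ) p.1)
  exact h

/-- Indicator of the disc `r² ≤ 9`. -/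
def near (p : ℝ × ℝ) : ℝ := if rsq p ≤ 9 then 1 else 0

@[fun_prop]
lemma measurable_near : Measurable near := by
  unfold near
  exact Measurable.ite (measurableSet_le measurable_rsq measurable_const)
    measurable_const measurable_const

lemma near_nonneg (p : ℝ × ℝ) : 0 ≤ near p := by unfold near; split_ifs <;> norm_num
lemma near_le_one (p : ℝ × ℝ) : near p ≤ 1 := by unfold near; split_ifs <;> norm_num

/-- The Hardy vector field `V = -f p` satisfies `div V ≥ wt` away from a disc. -/
lemma div_bound (p : ℝ × ℝ) : wt p ≤ -(2 * hprof p + 2 * rsq p * hprofD p) + 3 * near p := by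
  have h1 := rsq_nonneg p; have h2 := ell_nonneg p
  have e : -(2 * hprof p + 2 * rsq p * hprofD p) - wt p
      = (rsq p - 3 - 2 * ell p) / ((1 + rsq p) * (1 + ell p)) ^ 2 := by
    unfold hprof hprofD wt
    field_simp
    ring
  suffices h : -(3 * near p) ≤ (rsq p - 3 - 2 * ell p) / ((1 + rsq p) * (1 + ell p)) ^ 2 by
    linarith
  rw [le_div_iff₀ (by positivity)]
  by_cases hp : rsq p ≤ 9
  · rw [near, if_pos hp]
    have h3 : 1 + ell p ≤ (1 + rsq p) * (1 + ell p) := by nlinarith [mul_nonneg h1 h2]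
    have h4 : (1 + ell p) ^ 2 ≤ ((1 + rsq p) * (1 + ell p)) ^ 2 := by gcongr
    nlinarith
  · rw [near, if_neg hp]
    -- `log z ≤ z/4 - 1 + log 4`
    have h5 : ell p ≤ (1 + rsq p) / 4 - 1 + 2 * Real.log 2 := by
      have h6 := Real.log_le_sub_one_of_pos (x := (1 + rsq p) / 4) (by positivity)
      rw [Real.log_div (by positivity) (by norm_num)] at h6
      have h7 : Real.log 4 = 2 * Real.log 2 := by
        rw [show (4:ℝ) = 2 ^ 2 by norm_num, Real.log_pow]; norm_num
      unfold ell; linarith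
    have := Real.log_two_lt_d9
    push Not at hp
    linarith

lemma hprof_sq_le (p : ℝ × ℝ) : hprof p ^ 2 * rsq p ≤ wt p := by
  have h1 := rsq_nonneg p; have h2 := ell_nonneg p
  have e : wt p - hprof p ^ 2 * rsq p = 1 / ((1 + rsq p) * (1 + ell p)) ^ 2 := by
    unfold hprof wt; field_simp; ring
  have : 0 ≤ 1 / ((1 + rsq p) * (1 + ell p)) ^ 2 := by positivity
  linarith

section SliceLemmas

variable {u ux uy uxx uyy : ℝ × ℝ → ℝ}

lemma pg_wt : PG wt := PG.of_bdd (C := 1) fun p => by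
  rw [abs_of_nonneg (wt_nonneg p)]; exact wt_le_one p

lemma pg_near : PG near := PG.of_bdd (C := 1) fun p => by
  rw [abs_of_nonneg (near_nonneg p)]; exact near_le_one p

lemma pg_far (n : ℕ) : PG (far n) := PG.of_bdd (C := 1) fun p => by
  rw [abs_of_nonneg (far_nonneg n p)]; exact far_le_one n p

lemma PG.const (c : ℝ) : PG (fun _ => c) := PG.of_bdd (C := |c|) fun _ => le_rfl

lemma PG.add {f g : ℝ × ℝ → ℝ} (hf : PG f) (hg : PG g) : PG (fun p => f p + g p) := by
  obtain ⟨C, m, hC⟩ := hf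
  obtain ⟨D, k, hD⟩ := hg
  refine ⟨|C| + |D|, m + k, fun p => ?_⟩
  have h1 := one_le_one_add_rsq p
  calc |f p + g p| ≤ |f p| + |g p| := abs_add_le _ _
    _ ≤ C * (1 + rsq p) ^ m + D * (1 + rsq p) ^ k := add_le_add (hC p) (hD p)
    _ ≤ |C| * (1 + rsq p) ^ (m + k) + |D| * (1 + rsq p) ^ (m + k) := by
        gcongr
        · exact le_abs_self C
        · omega
        · exact le_abs_self D
        · omega
    _ = _ := by ring

lemma RD.sq {f : ℝ × ℝ → ℝ} (hf : RD f) : RD (fun p => f p ^ 2) := by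
  simpa [pow_two] using hf.mul hf

lemma Slice.grad_int (hs : Slice u ux uy uxx uyy) :
    Integrable (fun p => ux p ^ 2 + uy p ^ 2) :=
  (hs.rx.sq.integrable (hs.mx.pow_const 2)).add (hs.ry.sq.integrable (hs.my.pow_const 2))

lemma Slice.usq_int (hs : Slice u ux uy uxx uyy) {g : ℝ × ℝ → ℝ} (hg : PG g)
    (hm : Measurable g) : Integrable (fun p => g p * u p ^ 2) :=
  (hs.ru.sq.pg_mul hg).integrable (hm.mul (hs.mu.pow_const 2))

/-- Logarithmic Hardy inequality in the plane. -/
lemma Slice.hardy (hs : Slice u ux uy uxx uyy) :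
    ∫ p, wt p * u p ^ 2 ≤ 4 * (∫ p, (ux p ^ 2 + uy p ^ 2)) + 6 * ∫ p, near p * u p ^ 2 := by
  have mu := hs.mu
  have mx := hs.mx
  have my := hs.my
  have b1 : Integrable (fun p => (1 * hprof p + p.1 * (hprofD p * (2 * (p.1 * 1 + p.2 * 0))))
      * u p ^ 2) :=
    hs.usq_int (((PG.const 1).mul pg_hprof).add (PG.fst.mul (pg_hprofD.mul
      ((PG.const 2).mul ((PG.fst.mul (PG.const _)).add (PG.snd.mul (PG.const _)))))))
      (by fun_prop)
  have b2 : Integrable (fun p => (1 * hprof p + p.2 * (hprofD p * (2 * (p.1 * 0 + p.2 * 1))))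
      * u p ^ 2) :=
    hs.usq_int (((PG.const 1).mul pg_hprof).add (PG.snd.mul (pg_hprofD.mul
      ((PG.const 2).mul ((PG.fst.mul (PG.const _)).add (PG.snd.mul (PG.const _)))))))
      (by fun_prop)
  have a1 : Integrable (fun p => (p.1 * hprof p) * (2 * u p * ux p)) :=
    (((RD.pg_mul (PG.const 2) hs.ru).mul hs.rx).pg_mul (PG.fst.mul pg_hprof)).integrable
      (by fun_prop)
  have a2 : Integrable (fun p => (p.2 * hprof p) * (2 * u p * uy p)) :=
    (((RD.pg_mul (PG.const 2) hs.ru).mul hs.ry).pg_mul (PG.snd.mul pg_hprof)).integrable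
      (by fun_prop)
  have hx := ibp (dirD_fst.mul (dirD_hprof (1, 0))) hs.dx.sq b1 a1
    (hs.usq_int (PG.fst.mul pg_hprof) (by fun_prop))
  have hy := ibp (dirD_snd.mul (dirD_hprof (0, 1))) hs.dy.sq b2 a2
    (hs.usq_int (PG.snd.mul pg_hprof) (by fun_prop))
  simp only [] at hx hy
  have iw : Integrable (fun p => wt p * u p ^ 2) := hs.usq_int pg_wt (by fun_prop)
  have inr : Integrable (fun p => near p * u p ^ 2) := hs.usq_int pg_near (by fun_prop)
  have key := integral_mono (((iw.add b1).add b2).add (a1.add a2))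
    (((inr.const_mul 3).add (hs.grad_int.const_mul 2)).add (iw.const_mul (1 / 2))) (fun p => by
      simp only [Pi.add_apply]
      have h1 := mul_le_mul_of_nonneg_right (div_bound p) (sq_nonneg (u p))
      have h2 := mul_le_mul_of_nonneg_right (hprof_sq_le p) (sq_nonneg (u p))
      have h3 : 2 * (hprof p * u p) * (p.1 * ux p + p.2 * uy p)
          ≤ 2 * (ux p ^ 2 + uy p ^ 2) + 1 / 2 * (hprof p ^ 2 * rsq p * u p ^ 2) := by
        unfold rsq
        nlinarith [sq_nonneg (2 * ux p - hprof p * u p * p.1),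
          sq_nonneg (2 * uy p - hprof p * u p * p.2)]
      have e : rsq p = p.1 ^ 2 + p.2 ^ 2 := rfl
      have h4 : (1 * hprof p + p.1 * (hprofD p * (2 * (p.1 * 1 + p.2 * 0)))) * u p ^ 2
          + (1 * hprof p + p.2 * (hprofD p * (2 * (p.1 * 0 + p.2 * 1)))) * u p ^ 2
          = (2 * hprof p + 2 * rsq p * hprofD p) * u p ^ 2 := by rw [e]; ring
      linarith)
  rw [integral_add' ((iw.add b1).add b2) (a1.add a2), integral_add' (iw.add b1) b2,
    integral_add' iw b1, integral_add' a1 a2,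
    integral_add' ((inr.const_mul 3).add (hs.grad_int.const_mul 2)) (iw.const_mul (1 / 2)),
    integral_add' (inr.const_mul 3) (hs.grad_int.const_mul 2), integral_const_mul,
    integral_const_mul, integral_const_mul] at key
  linarith

/-- The density controlling all contributions of the far region. -/
def jden (u ux uy : ℝ × ℝ → ℝ) (p : ℝ × ℝ) : ℝ :=
  3 * (ux p ^ 2 + uy p ^ 2) + 1024 * (wt p * u p ^ 2)

lemma Slice.jden_int (hs : Slice u ux uy uxx uyy) : Integrable (jden u ux uy) :=
  (hs.grad_int.const_mul 3).add
    ((hs.usq_int pg_wt continuous_wt.measurable).const_mul 1024)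

lemma jden_nonneg (p : ℝ × ℝ) : 0 ≤ jden u ux uy p := by
  have := wt_nonneg p
  unfold jden; positivity

lemma Slice.jden_far_int (hs : Slice u ux uy uxx uyy) (n : ℕ) :
    Integrable (fun p => far n p * jden u ux uy p) := by
  refine hs.jden_int.bdd_mul (c := 1) (measurable_far n).aestronglyMeasurable
    (Eventually.of_forall fun p => ?_)
  rw [Real.norm_eq_abs, abs_of_nonneg (far_nonneg n p)]; exact far_le_one n p

/-- The diffusion term tested against `χ u`. -/
lemma Slice.diffusion (hs : Slice u ux uy uxx uyy) {n : ℕ} (hn : 1 ≤ n) :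
    (∫ p, (u p * chi n p) * uxx p) + (∫ p, (u p * chi n p) * uyy p)
      ≤ -(∫ p, (ux p ^ 2 + uy p ^ 2)) + 1 / 2 * ∫ p, far n p * jden u ux uy p := by
  have mu := hs.mu
  have mx := hs.mx
  have my := hs.my
  have mxx := hs.mxx
  have myy := hs.myy
  have b1 : Integrable (fun p => (ux p * chi n p + u p * (chid n p * (p.1 * 1 + p.2 * 0)))
      * ux p) :=
    (hs.rx.pg_mul ((hs.rx.pg.mul (pg_chi n)).add (hs.ru.pg.mul (pg_chid_mul hn (1, 0))))).integrable
      (by fun_prop)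
  have b2 : Integrable (fun p => (uy p * chi n p + u p * (chid n p * (p.1 * 0 + p.2 * 1)))
      * uy p) :=
    (hs.ry.pg_mul ((hs.ry.pg.mul (pg_chi n)).add (hs.ru.pg.mul (pg_chid_mul hn (0, 1))))).integrable
      (by fun_prop)
  have hx := ibp (hs.dx.mul (dirD_chi n (1, 0))) hs.dxx b1
    ((hs.rxx.pg_mul (hs.ru.pg.mul (pg_chi n))).integrable (by fun_prop))
    ((hs.rx.pg_mul (hs.ru.pg.mul (pg_chi n))).integrable (by fun_prop))
  have hy := ibp (hs.dy.mul (dirD_chi n (0, 1))) hs.dyy b2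
    ((hs.ryy.pg_mul (hs.ru.pg.mul (pg_chi n))).integrable (by fun_prop))
    ((hs.ry.pg_mul (hs.ru.pg.mul (pg_chi n))).integrable (by fun_prop))
  simp only [] at hx hy
  rw [hx, hy]
  have key := integral_mono hs.grad_int
    ((b1.add b2).add ((hs.jden_far_int n).const_mul (1 / 2))) (fun p => by
      simp only [Pi.add_apply]
      have hc := chid_bound hn p
      have hf0 := far_nonneg n p
      have hf1 := one_sub_chi_le n p
      have hG : 0 ≤ ux p ^ 2 + uy p ^ 2 := by positivity
      have h1 := mul_le_mul_of_nonneg_right hf1 hG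
      have h2 := mul_le_mul_of_nonneg_right hc (sq_nonneg (u p))
      have h3 : -(2 * (u p * chid n p) * (p.1 * ux p + p.2 * uy p))
          ≤ far n p * (ux p ^ 2 + uy p ^ 2) + chid n p ^ 2 * rsq p * u p ^ 2 := by
        by_cases h : (n : ℝ) ≤ ell p
        · rw [far, if_pos h]
          unfold rsq
          nlinarith [sq_nonneg (ux p + chid n p * u p * p.1),
            sq_nonneg (uy p + chid n p * u p * p.2)]
        · rw [chid_eq_zero (not_le.1 h).le]
          have := mul_nonneg hf0 hG
          simpa using this
      unfold jden
      linarith)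
  rw [integral_add' (b1.add b2) ((hs.jden_far_int n).const_mul (1 / 2)), integral_add' b1 b2,
    integral_const_mul] at key
  linarith

/-- The common value of the derivative of `y (r²)^{q/2} χ` along `x` and of `x (r²)^{q/2} χ`
along `y`; their equality says that the velocity times `χ` is divergence free. -/
def advd (q : ℝ) (n : ℕ) (p : ℝ × ℝ) : ℝ :=
  q * (p.2 * p.1 * rsq p ^ (q / 2 - 1)) * chi n p
    + rsq p ^ (q / 2) * (p.2 * (chid n p * (p.1 * 1 + p.2 * 0)))

lemma dirD_rpow_chi (q : ℝ) (n : ℕ) (v : ℝ × ℝ) {p : ℝ × ℝ} (hp : rsq p ≠ 0) :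
    HasLineDerivAt ℝ (fun p => rsq p ^ (q / 2) * chi n p)
      ((q * rsq p ^ (q / 2 - 1) * chi n p + rsq p ^ (q / 2) * chid n p)
        * (p.1 * v.1 + p.2 * v.2)) p v := by
  have h1 := DirD.radial (v := v) (φ' := fun _ => _)
    (Real.hasDerivAt_rpow_const (p := q / 2) (Or.inl hp))
  have h2 := HasDerivAt.mul h1 (dirD_chi n v p)
  simp only [zero_smul, add_zero] at h2
  exact h2.congr_deriv (by ring)

lemma dirD_adv_x (q : ℝ) (n : ℕ) :
    DirD (1, 0) (fun p => p.2 * (rsq p ^ (q / 2) * chi n p)) (advd q n) := by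
  intro p
  have hl : ∀ t : ℝ, (p + t • ((1, 0) : ℝ × ℝ)).2 = p.2 := fun t => by simp
  by_cases hp : p.2 = 0
  · have h := hasDerivAt_const (0 : ℝ) (0 : ℝ)
    have e : advd q n p = 0 := by simp [advd, hp]
    rw [e]
    refine h.congr_of_eventuallyEq (Eventually.of_forall fun t => ?_)
    simp only [hl, hp, zero_mul]
  · have hr : rsq p ≠ 0 := by unfold rsq; positivity
    have h := HasDerivAt.const_mul p.2 (dirD_rpow_chi q n (1, 0) hr)
    have h' : HasDerivAt (fun t : ℝ => (p + t • ((1, 0) : ℝ × ℝ)).2 *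
        (rsq (p + t • ((1, 0) : ℝ × ℝ)) ^ (q / 2) * chi n (p + t • ((1, 0) : ℝ × ℝ))))
        (p.2 * ((q * rsq p ^ (q / 2 - 1) * chi n p + rsq p ^ (q / 2) * chid n p)
          * (p.1 * 1 + p.2 * 0))) 0 := by
      simp only [hl]; exact h
    exact h'.congr_deriv (by simp only [advd]; ring)

lemma dirD_adv_y (q : ℝ) (n : ℕ) :
    DirD (0, 1) (fun p => p.1 * (rsq p ^ (q / 2) * chi n p)) (advd q n) := by
  intro p
  have hl : ∀ t : ℝ, (p + t • ((0, 1) : ℝ × ℝ)).1 = p.1 := fun t => by simp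
  by_cases hp : p.1 = 0
  · have h := hasDerivAt_const (0 : ℝ) (0 : ℝ)
    have e : advd q n p = 0 := by simp [advd, hp]
    rw [e]
    refine h.congr_of_eventuallyEq (Eventually.of_forall fun t => ?_)
    simp only [hl, hp, zero_mul]
  · have hr : rsq p ≠ 0 := by unfold rsq; positivity
    have h := HasDerivAt.const_mul p.1 (dirD_rpow_chi q n (0, 1) hr)
    have h' : HasDerivAt (fun t : ℝ => (p + t • ((0, 1) : ℝ × ℝ)).1 *
        (rsq (p + t • ((0, 1) : ℝ × ℝ)) ^ (q / 2) * chi n (p + t • ((0, 1) : ℝ × ℝ))))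
        (p.1 * ((q * rsq p ^ (q / 2 - 1) * chi n p + rsq p ^ (q / 2) * chid n p)
          * (p.1 * 0 + p.2 * 1))) 0 := by
      simp only [hl]; exact h
    exact h'.congr_deriv (by simp only [advd]; ring)

lemma pg_xy_rpow {q : ℝ} (hq : 1 ≤ q) : PG (fun p => p.2 * p.1 * rsq p ^ (q / 2 - 1)) := by
  obtain ⟨C, k, h⟩ := PG.rpow (a := q / 2) (by linarith)
  refine ⟨C, k, fun p => le_trans ?_ (h p)⟩
  have hr := rsq_nonneg p
  rw [abs_of_nonneg (Real.rpow_nonneg hr (q / 2)), abs_mul,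
    abs_of_nonneg (Real.rpow_nonneg hr (q / 2 - 1))]
  have hxy : |p.2 * p.1| ≤ rsq p := by
    rw [abs_mul]; unfold rsq
    nlinarith [sq_nonneg (|p.2| - |p.1|), sq_abs p.1, sq_abs p.2, abs_nonneg p.1, abs_nonneg p.2]
  rcases hr.eq_or_lt with h0 | h0
  · have : |p.2 * p.1| = 0 := le_antisymm (hxy.trans h0.symm.le) (abs_nonneg _)
    rw [this, zero_mul]
    exact Real.rpow_nonneg hr _
  · calc |p.2 * p.1| * rsq p ^ (q / 2 - 1) ≤ rsq p * rsq p ^ (q / 2 - 1) := by gcongr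
      _ = rsq p ^ (q / 2) := by
        rw [Real.rpow_sub_one h0.ne']; field_simp

/-- The rotation does no work: the velocity is tangent to the level sets of the cutoff. -/
lemma Slice.advection (hs : Slice u ux uy uxx uyy) {q : ℝ} (hq : 1 ≤ q) {n : ℕ} (hn : 1 ≤ n) :
    ∫ p, (u p * chi n p) * (rsq p ^ (q / 2) * (-p.2 * ux p + p.1 * uy p)) = 0 := by
  have mu := hs.mu
  have mx := hs.mx
  have my := hs.my
  have hr : PG (fun p => rsq p ^ (q / 2) * chi n p) := (PG.rpow (by linarith)).mul (pg_chi n)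
  have pa : PG (advd q n) := by
    exact (((PG.const q).mul (pg_xy_rpow hq)).mul (pg_chi n)).add
      ((PG.rpow (by linarith)).mul (PG.snd.mul (pg_chid_mul hn (1, 0))))
  have ma : Measurable (advd q n) := by unfold advd; fun_prop
  have b : Integrable (fun p => advd q n p * u p ^ 2) := hs.usq_int pa ma
  have a1 : Integrable (fun p => (p.2 * (rsq p ^ (q / 2) * chi n p)) * (2 * u p * ux p)) :=
    (((RD.pg_mul (PG.const 2) hs.ru).mul hs.rx).pg_mul (PG.snd.mul hr)).integrable
      (by fun_prop)
  have a2 : Integrable (fun p => (p.1 * (rsq p ^ (q / 2) * chi n p)) * (2 * u p * uy p)) :=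
    (((RD.pg_mul (PG.const 2) hs.ru).mul hs.ry).pg_mul (PG.fst.mul hr)).integrable
      (by fun_prop)
  have hx := ibp (dirD_adv_x q n) hs.dx.sq b a1
    (hs.usq_int (PG.snd.mul hr) (by fun_prop))
  have hy := ibp (dirD_adv_y q n) hs.dy.sq b a2
    (hs.usq_int (PG.fst.mul hr) (by fun_prop))
  have e : ∀ p, (u p * chi n p) * (rsq p ^ (q / 2) * (-p.2 * ux p + p.1 * uy p))
      = 1 / 2 * ((p.1 * (rsq p ^ (q / 2) * chi n p)) * (2 * u p * uy p)
        - (p.2 * (rsq p ^ (q / 2) * chi n p)) * (2 * u p * ux p)) := fun p => by ring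
  simp_rw [e]
  rw [integral_const_mul, integral_sub a2 a1, hx, hy]
  ring

/-- What is used of the initial datum `f`: it is bounded, supported in `r ≤ 4ε`, and
Lipschitz with constant `2/ε`. -/
structure TestFn (ε : ℝ) (f : ℝ × ℝ → ℝ) : Prop where
  pos : 0 < ε
  le_one : ε ≤ 1
  cont : Continuous f
  bdd : ∀ p, |f p| ≤ 1
  supp : ∀ p, 16 * ε ^ 2 < rsq p → f p = 0
  lip : ∀ p p', |f p - f p'| ≤ 2 / ε * √(rsq (p - p'))

/-- A square containing the support of `f` and of its translates by at most `ε`. -/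
def box (ε : ℝ) : Set (ℝ × ℝ) := Set.Icc (-(5 * ε)) (5 * ε) ×ˢ Set.Icc (-(5 * ε)) (5 * ε)

lemma measurableSet_box (ε : ℝ) : MeasurableSet (box ε) := measurableSet_Icc.prod measurableSet_Icc

lemma volume_box {ε : ℝ} (hε : 0 < ε) : (volume (box ε)).toReal = 100 * ε ^ 2 := by
  rw [box, Measure.volume_eq_prod, Measure.prod_prod, Real.volume_Icc, ENNReal.toReal_mul,
    ENNReal.toReal_ofReal (by linarith)]
  ring

lemma volume_box_ne_top (ε : ℝ) : volume (box ε) ≠ ⊤ := by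
  rw [box, Measure.volume_eq_prod, Measure.prod_prod, Real.volume_Icc]
  exact ENNReal.mul_ne_top ENNReal.ofReal_ne_top ENNReal.ofReal_ne_top

variable {ε : ℝ} {f : ℝ × ℝ → ℝ}

lemma TestFn.eq_zero (hT : TestFn ε f) {p : ℝ × ℝ} (hp : 4 * ε < |p.1| ∨ 4 * ε < |p.2|) :
    f p = 0 := by
  have h0 := hT.pos
  apply hT.supp
  unfold rsq
  rw [← sq_abs p.1, ← sq_abs p.2]
  rcases hp with h | h
  · nlinarith [sq_nonneg (|p.2|)]
  · nlinarith [sq_nonneg (|p.1|)]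

lemma lt_of_notMem_box {p : ℝ × ℝ} (hp : p ∉ box ε) :
    5 * ε < |p.1| ∨ 5 * ε < |p.2| := by
  by_contra! h
  exact hp ⟨abs_le.1 h.1, abs_le.1 h.2⟩

lemma TestFn.rd (hT : TestFn ε f) : RD f := by
  have h0 := hT.pos
  intro k
  refine ⟨(1 + 16 * ε ^ 2) ^ k, fun p => ?_⟩
  by_cases h : 16 * ε ^ 2 < rsq p
  · rw [hT.supp p h]; simp; positivity
  · push Not at h
    have h1 := rsq_nonneg p
    calc (1 + rsq p) ^ k * |f p| ≤ (1 + 16 * ε ^ 2) ^ k * 1 := by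
          gcongr
          exact hT.bdd p
      _ = _ := mul_one _

/-- Integration by parts against the Lipschitz datum along a unit vector `v`, followed by Young's
inequality: the constant is `(2/ε)²` times the area `100 ε²` of `box ε`. -/
lemma TestFn.test_bound (hT : TestFn ε f) {v : ℝ × ℝ} {g g' : ℝ × ℝ → ℝ} (hv : rsq v = 1)
    (hv1 : |v.1| ≤ 1) (hv2 : |v.2| ≤ 1)
    (hg : DirD v g g') (hgr : RD g) (hgm : Measurable g) (hg'r : RD g') :
    |∫ p, f p * g' p| ≤ 1 / 4 * (∫ p, g p ^ 2) + 400 := by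
  have h0 := hT.pos
  obtain ⟨M, hM⟩ := hg'r 0
  have hgi := hgr.integrable hgm
  have hfi := hT.rd.integrable hT.cont.measurable
  have h := lipschitz_ibp (L := 2 / ε) (M := M) (S := box ε) h0 (measurableSet_box ε) hfi
    ⟨1, hT.bdd⟩ (v := v) (f := f) (g := g) (g' := g') (fun p h hh => ?_) hg hgi
    (fun p => by simpa using hM p)
  · refine h.trans ?_
    have i1 : Integrable (fun p => 1 / 4 * g p ^ 2) :=
      (hgr.sq.integrable (hgm.pow_const 2)).const_mul _
    have i2 : Integrable (fun p => (4 / ε ^ 2) * (box ε).indicator (1 : ℝ × ℝ → ℝ) p) :=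
      ((integrable_indicator_iff (measurableSet_box ε)).2
        (integrableOn_const (volume_box_ne_top ε))).const_mul _
    have i3 : Integrable (fun p => 2 / ε * (box ε).indicator 1 p * |g p|) := by
      have : (fun p => 2 / ε * (box ε).indicator 1 p * |g p|)
          = fun p => 2 / ε * (box ε).indicator (fun p => |g p|) p := by
        ext p; by_cases hp : p ∈ box ε <;> simp [hp]
      rw [this]
      exact (hgi.abs.indicator (measurableSet_box ε)).const_mul _
    have key := integral_mono i3 (i1.add i2) (fun p => by
      simp only [Pi.add_apply]
      by_cases hp : p ∈ box ε
      · simp only [Set.indicator_of_mem hp, Pi.one_apply, mul_one]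
        have e : 4 / ε ^ 2 = (2 / ε) ^ 2 := by ring
        rw [e]
        nlinarith [sq_nonneg (|g p| / 2 - 2 / ε), sq_abs (g p)]
      · simp only [Set.indicator_of_notMem hp, mul_zero, zero_mul, add_zero]
        positivity)
    rw [integral_add' i1 i2, integral_const_mul, integral_const_mul,
      integral_indicator (measurableSet_box ε)] at key
    simp only [Pi.one_apply, integral_const, smul_eq_mul, mul_one, Measure.real,
      Measure.restrict_apply_univ, volume_box h0] at key
    have e : 4 / ε ^ 2 * (100 * ε ^ 2) = 400 := by field_simp; norm_num
    linarith
  · by_cases hp : p ∈ box ε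
    · have := hT.lip (p + h • v) p
      have e : rsq (p + h • v - p) = h ^ 2 := by
        rw [add_sub_cancel_left]
        have : rsq (h • v) = h ^ 2 * rsq v := by
          simp [rsq]; ring
        rw [this, hv, mul_one]
      rw [e, Real.sqrt_sq_eq_abs] at this
      simpa [hp] using this
    · have hz : 5 * ε < |p.1| ∨ 5 * ε < |p.2| := lt_of_notMem_box hp
      have z1 : f p = 0 := hT.eq_zero (hz.imp (fun h => by linarith) (fun h => by linarith))
      have hb1 : |h * v.1| ≤ ε := by
        rw [abs_mul]; nlinarith [abs_nonneg h, abs_nonneg v.1]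
      have hb2 : |h * v.2| ≤ ε := by
        rw [abs_mul]; nlinarith [abs_nonneg h, abs_nonneg v.2]
      have z2 : f (p + h • v) = 0 := by
        apply hT.eq_zero
        simp only [Prod.fst_add, Prod.snd_add, Prod.smul_fst, Prod.smul_snd, smul_eq_mul]
        refine hz.imp (fun hh => ?_) (fun hh => ?_)
        · have := abs_sub_abs_le_abs_sub p.1 (-(h * v.1))
          rw [abs_neg, sub_neg_eq_add] at this
          linarith
        · have := abs_sub_abs_le_abs_sub p.2 (-(h * v.2))
          rw [abs_neg, sub_neg_eq_add] at this
          linarith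
      simp [hp, z1, z2]

/-- The differential inequality for `∫ (u - f)² χ`, with `f` the initial datum: the right-hand
side of the equation tested against `2 (u - f) χ`. -/
lemma Slice.energy (hs : Slice u ux uy uxx uyy) (hT : TestFn ε f) {q κ : ℝ} (hq : 1 ≤ q)
    (hκ : 0 < κ) {n : ℕ} (hn : 16 ≤ n) :
    ∫ p, 2 * (u p - f p) * (κ * (uxx p + uyy p) - rsq p ^ (q / 2) * (-p.2 * ux p + p.1 * uy p))
        * chi n p
      ≤ -κ * (∫ p, (ux p ^ 2 + uy p ^ 2))
        + (2 * ((16 * ε ^ 2) ^ (q + 1) / κ) * (∫ p, f p ^ 2) + 1600 * κ)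
        + κ * ∫ p, far n p * jden u ux uy p := by
  have mu := hs.mu
  have mx := hs.mx
  have my := hs.my
  have mxx := hs.mxx
  have myy := hs.myy
  have mf := hT.cont.measurable
  have h0 := hT.pos
  have hfc : ∀ p, f p * chi n p = f p := fun p => by
    by_cases h : 16 * ε ^ 2 < rsq p
    · rw [hT.supp p h, zero_mul]
    · rw [chi_eq_one, mul_one]
      have h1 := rsq_nonneg p
      have h2 : ell p ≤ rsq p := by
        have := Real.log_le_sub_one_of_pos (x := 1 + rsq p) (by linarith)
        unfold ell; linarith
      have h3 : (16 : ℝ) ≤ n := by exact_mod_cast hn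
      nlinarith [hT.le_one]
  have hadv : RD (fun p => rsq p ^ (q / 2) * (-p.2 * ux p + p.1 * uy p)) := by
    have h1 : RD (fun p => rsq p ^ (q / 2) * (-p.2) * ux p) :=
      hs.rx.pg_mul ((PG.rpow (by linarith)).mul PG.snd.neg)
    have h2 : RD (fun p => rsq p ^ (q / 2) * p.1 * uy p) :=
      hs.ry.pg_mul ((PG.rpow (by linarith)).mul PG.fst)
    intro k
    obtain ⟨C, hC⟩ := h1 k
    obtain ⟨D, hD⟩ := h2 k
    refine ⟨C + D, fun p => ?_⟩
    have e : rsq p ^ (q / 2) * (-p.2 * ux p + p.1 * uy p)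
        = rsq p ^ (q / 2) * (-p.2) * ux p + rsq p ^ (q / 2) * p.1 * uy p := by ring
    beta_reduce
    rw [e]
    have h3 := one_le_one_add_rsq p
    calc _ ≤ (1 + rsq p) ^ k * (|rsq p ^ (q / 2) * (-p.2) * ux p|
          + |rsq p ^ (q / 2) * p.1 * uy p|) := by gcongr; exact abs_add_le _ _
      _ ≤ C + D := by rw [mul_add]; exact add_le_add (hC p) (hD p)
  have j1 : Integrable (fun p => (u p * chi n p) * uxx p) :=
    (hs.rxx.pg_mul (hs.ru.pg.mul (pg_chi n))).integrable (by fun_prop)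
  have j2 : Integrable (fun p => (u p * chi n p) * uyy p) :=
    (hs.ryy.pg_mul (hs.ru.pg.mul (pg_chi n))).integrable (by fun_prop)
  have j3 : Integrable (fun p => (u p * chi n p) *
      (rsq p ^ (q / 2) * (-p.2 * ux p + p.1 * uy p))) :=
    (hadv.pg_mul (hs.ru.pg.mul (pg_chi n))).integrable (by fun_prop)
  have j4 : Integrable (fun p => f p * uxx p) := (hT.rd.mul hs.rxx).integrable (by fun_prop)
  have j5 : Integrable (fun p => f p * uyy p) := (hT.rd.mul hs.ryy).integrable (by fun_prop)
  have j6 : Integrable (fun p => f p * (rsq p ^ (q / 2) * (-p.2 * ux p + p.1 * uy p))) :=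
    (hT.rd.mul hadv).integrable (by fun_prop)
  have e : ∀ p, 2 * (u p - f p) * (κ * (uxx p + uyy p)
        - rsq p ^ (q / 2) * (-p.2 * ux p + p.1 * uy p)) * chi n p
      = (2 * κ) * ((u p * chi n p) * uxx p + (u p * chi n p) * uyy p)
        - 2 * ((u p * chi n p) * (rsq p ^ (q / 2) * (-p.2 * ux p + p.1 * uy p)))
        - (2 * κ) * (f p * uxx p + f p * uyy p)
        + 2 * (f p * (rsq p ^ (q / 2) * (-p.2 * ux p + p.1 * uy p))) := fun p => by
    linear_combination (-2 * (κ * (uxx p + uyy p)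
        - rsq p ^ (q / 2) * (-p.2 * ux p + p.1 * uy p))) * hfc p
  simp_rw [e]
  have k1 := (j1.add j2).const_mul (2 * κ)
  have k2 := j3.const_mul 2
  have k3 := (j4.add j5).const_mul (2 * κ)
  have k4 := j6.const_mul 2
  have E := integral_add' ((k1.sub k2).sub k3) k4
  rw [integral_sub' (k1.sub k2) k3, integral_sub' k1 k2, integral_const_mul, integral_const_mul,
    integral_const_mul, integral_const_mul, integral_add' j1 j2, integral_add' j4 j5,
    hs.advection hq (by omega)] at E
  refine (le_of_eq E).trans ?_
  have h1 := hs.diffusion (n := n) (by omega)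
  have h2 := hT.test_bound (v := (1, 0)) (by simp [rsq]) (by simp) (by simp) hs.dxx hs.rx hs.mx
    hs.rxx
  have h3 := hT.test_bound (v := (0, 1)) (by simp [rsq]) (by simp) (by simp) hs.dyy hs.ry hs.my
    hs.ryy
  have h4 : ∫ p, f p * (rsq p ^ (q / 2) * (-p.2 * ux p + p.1 * uy p))
      ≤ κ / 4 * (∫ p, (ux p ^ 2 + uy p ^ 2))
        + ((16 * ε ^ 2) ^ (q + 1) / κ) * ∫ p, f p ^ 2 := by
    have i1 := hs.grad_int.const_mul (κ / 4)
    have i2 := (hT.rd.sq.integrable (by fun_prop)).const_mul ((16 * ε ^ 2) ^ (q + 1) / κ)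
    have key := integral_mono j6 (i1.add i2) (fun p => by
      simp only [Pi.add_apply]
      have hr := rsq_nonneg p
      have a1 : f p ^ 2 * ((rsq p ^ (q / 2)) ^ 2 * rsq p) ≤ (16 * ε ^ 2) ^ (q + 1) * f p ^ 2 := by
        by_cases h : 16 * ε ^ 2 < rsq p
        · rw [hT.supp p h]; simp
        · push Not at h
          have e1 : (rsq p ^ (q / 2)) ^ 2 * rsq p = rsq p ^ (q + 1) := by
            rw [← Real.rpow_natCast, ← Real.rpow_mul hr, Real.rpow_add_one' hr (by linarith)]
            congr 2; push_cast; ring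
          rw [e1, mul_comm]
          gcongr
      have a2 : (-p.2 * ux p + p.1 * uy p) ^ 2 ≤ rsq p * (ux p ^ 2 + uy p ^ 2) := by
        unfold rsq; nlinarith [sq_nonneg (p.1 * ux p + p.2 * uy p)]
      have a3 : f p * (rsq p ^ (q / 2) * (-p.2 * ux p + p.1 * uy p))
          ≤ κ / 4 * (ux p ^ 2 + uy p ^ 2) + f p ^ 2 * ((rsq p ^ (q / 2)) ^ 2 * rsq p) / κ := by
        set G := ux p ^ 2 + uy p ^ 2
        set W := -p.2 * ux p + p.1 * uy p
        set F := f p * rsq p ^ (q / 2) with hF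
        have hG : 0 ≤ G := by positivity
        have b1 : f p ^ 2 * ((rsq p ^ (q / 2)) ^ 2 * rsq p) / κ = F ^ 2 * rsq p / κ := by
          rw [hF]; ring
        rw [b1, ← mul_assoc, ← hF]
        have b2 : (F * W) ^ 2 ≤ (κ / 4 * G + F ^ 2 * rsq p / κ) ^ 2 := by
          have b3 : (F * W) ^ 2 ≤ F ^ 2 * (rsq p * G) := by
            rw [mul_pow]; gcongr
          have b4 : 4 * (κ / 4 * G) * (F ^ 2 * rsq p / κ) = F ^ 2 * (rsq p * G) := by
            field_simp
          nlinarith [sq_nonneg (κ / 4 * G - F ^ 2 * rsq p / κ)]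
        exact le_trans (le_abs_self _) (abs_le_of_sq_le_sq b2 (by positivity))
      refine a3.trans (add_le_add le_rfl ?_)
      rw [div_mul_eq_mul_div]
      gcongr)
    rw [integral_add' i1 i2, integral_const_mul, integral_const_mul] at key
    exact key
  have h5 : ∫ p, (ux p ^ 2 + uy p ^ 2) = (∫ p, ux p ^ 2) + ∫ p, uy p ^ 2 :=
    integral_add (hs.rx.sq.integrable (hs.mx.pow_const 2))
      (hs.ry.sq.integrable (hs.my.pow_const 2))
  have h6 := neg_le_of_abs_le h2
  have h7 := neg_le_of_abs_le h3
  have h8 := mul_le_mul_of_nonneg_left h1 (by positivity : 0 ≤ 2 * κ)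
  have h9 := mul_le_mul_of_nonneg_left (add_le_add h6 h7) (by positivity : 0 ≤ 2 * κ)
  rw [h5] at h4 h8 ⊢
  linarith

end SliceLemmas

/-! ### The initial datum -/

lemma tentLine_eq_max {h : ℝ} (hh : 0 < h) (s : ℝ) : tentLine h s = max 0 (1 - |s| / h) := by
  unfold tentLine
  split_ifs with hs
  · rw [max_eq_right, sub_div, div_self hh.ne']
    rw [sub_nonneg, div_le_one hh]; exact hs
  · rw [max_eq_left]
    rw [sub_nonpos, one_le_div hh]; exact (not_le.1 hs).le

lemma sqrt_rsq_eq_norm (p : ℝ × ℝ) : √(rsq p) = ‖((p.1 : ℂ) + p.2 * Complex.I)‖ := by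
  rw [Complex.norm_add_mul_I]; rfl

lemma abs_sqrt_rsq_sub_le (p p' : ℝ × ℝ) : |√(rsq p) - √(rsq p')| ≤ √(rsq (p - p')) := by
  simp only [sqrt_rsq_eq_norm]
  refine (abs_norm_sub_norm_le _ _).trans (le_of_eq ?_)
  congr 1
  simp only [Prod.fst_sub, Prod.snd_sub]
  push_cast; ring

lemma abs_snd_le_sqrt_rsq (p : ℝ × ℝ) : |p.2| ≤ √(rsq p) := by
  apply Real.le_sqrt_of_sq_le
  rw [sq_abs]; unfold rsq; nlinarith [sq_nonneg p.1]

/-- The initial datum with `ε = κ^β`. -/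
def datum (ε : ℝ) (p : ℝ × ℝ) : ℝ :=
  tentLine ε (√(rsq p) - 3 * ε) * (p.2 / √(rsq p))

lemma abs_snd_div_le (p : ℝ × ℝ) : |p.2 / √(rsq p)| ≤ 1 := by
  rw [abs_div, abs_of_nonneg (Real.sqrt_nonneg _)]
  exact div_le_one_of_le₀ (abs_snd_le_sqrt_rsq p) (Real.sqrt_nonneg _)

lemma datum_lip {ε : ℝ} (hε : 0 < ε) (p p' : ℝ × ℝ) :
    |datum ε p - datum ε p'| ≤ 2 / ε * √(rsq (p - p')) := by
  have hr := abs_sqrt_rsq_sub_le p p'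
  have hy : |p.2 - p'.2| ≤ √(rsq (p - p')) := abs_snd_le_sqrt_rsq (p - p')
  have hb := abs_snd_div_le p
  have hb' := abs_snd_div_le p'
  have hyr := abs_snd_le_sqrt_rsq p
  unfold datum
  rw [tentLine_eq_max hε, tentLine_eq_max hε]
  set r := √(rsq p) with hrdef
  set r' := √(rsq p') with hr'def
  set d := √(rsq (p - p'))
  have hd : 0 ≤ d := Real.sqrt_nonneg _
  set a := max 0 (1 - |r - 3 * ε| / ε) with ha
  set a' := max 0 (1 - |r' - 3 * ε| / ε) with ha'
  have ha0 : 0 ≤ a := le_max_left _ _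
  have ha0' : 0 ≤ a' := le_max_left _ _
  have ha1' : a' ≤ 1 := max_le zero_le_one (by
    have : 0 ≤ |r' - 3 * ε| / ε := by positivity
    linarith)
  have hda : |a - a'| ≤ d / ε := by
    have h1 := abs_max_sub_max_le_abs (1 - |r - 3 * ε| / ε) (1 - |r' - 3 * ε| / ε) 0
    rw [max_comm _ 0, max_comm _ 0] at h1
    refine h1.trans ?_
    have e : 1 - |r - 3 * ε| / ε - (1 - |r' - 3 * ε| / ε)
        = -((|r - 3 * ε| - |r' - 3 * ε|) / ε) := by ring
    rw [e, abs_neg, abs_div, abs_of_pos hε]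
    gcongr
    refine (abs_abs_sub_abs_le _ _).trans ?_
    rw [sub_sub_sub_cancel_right]; exact hr
  have hdε : 0 ≤ d / ε := by positivity
  have e2 : 2 / ε * d = 2 * (d / ε) := by ring
  rw [e2]
  rcases ha0.eq_or_lt with h | h
  · rw [← h] at hda ⊢
    rw [zero_sub, abs_neg] at hda
    rw [zero_mul, zero_sub, abs_neg, abs_mul]
    nlinarith [abs_nonneg a', abs_nonneg (p'.2 / r')]
  rcases ha0'.eq_or_lt with h' | h'
  · rw [← h'] at hda ⊢
    rw [sub_zero] at hda
    rw [zero_mul, sub_zero, abs_mul]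
    nlinarith [abs_nonneg a, abs_nonneg (p.2 / r)]
  -- both tents are positive, so both radii are at least `2ε`
  have big : ∀ s : ℝ, 0 < max 0 (1 - |s - 3 * ε| / ε) → 2 * ε ≤ s := fun s hs => by
    rcases lt_max_iff.1 hs with h | h
    · exact absurd h (lt_irrefl _)
    · rw [sub_pos, div_lt_one hε] at h
      linarith [(abs_lt.1 h).1]
  have hr2 := big r h
  have hr2' := big r' h'
  have hr0 : 0 < r := by linarith
  have hr0' : 0 < r' := by linarith
  have hq : |p.2 / r - p'.2 / r'| ≤ d / ε := by
    have e : p.2 / r - p'.2 / r' = (p.2 / r * (r' - r) + (p.2 - p'.2)) / r' := by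
      field_simp; ring
    rw [e, abs_div, abs_of_pos hr0', div_le_div_iff₀ hr0' hε]
    have h1 : |p.2 / r * (r' - r) + (p.2 - p'.2)| ≤ 2 * d := by
      refine (abs_add_le _ _).trans ?_
      rw [abs_mul, abs_sub_comm r' r]
      nlinarith [abs_nonneg (r - r'), abs_nonneg (p.2 / r)]
    nlinarith
  have e : a * (p.2 / r) - a' * (p'.2 / r')
      = (a - a') * (p.2 / r) + a' * (p.2 / r - p'.2 / r') := by ring
  rw [e]
  refine (abs_add_le _ _).trans ?_
  rw [abs_mul, abs_mul, abs_of_nonneg ha0']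
  nlinarith [abs_nonneg (a - a'), abs_nonneg (p.2 / r - p'.2 / r')]

lemma testFn_datum {ε : ℝ} (hε : 0 < ε) (h1 : ε ≤ 1) (hc : Continuous (datum ε)) :
    TestFn ε (datum ε) where
  pos := hε
  le_one := h1
  cont := hc
  bdd p := by
    unfold datum
    rw [abs_mul, tentLine_eq_max hε, abs_of_nonneg (le_max_left _ _)]
    refine mul_le_one₀ (max_le zero_le_one ?_) (abs_nonneg _) (abs_snd_div_le p)
    have : 0 ≤ |√(rsq p) - 3 * ε| / ε := by positivity
    linarith
  supp p hp := by
    unfold datum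
    have h4 : 4 * ε < √(rsq p) := by
      apply Real.lt_sqrt_of_sq_lt; nlinarith
    rw [tentLine, if_neg, zero_mul]
    rw [not_le, lt_abs]; left; linarith
  lip := datum_lip hε

/-- The datum is at least `1/4` on a square of side `ε/2` around `(0, 3ε)`. -/
lemma datum_l2_lower {ε : ℝ} (hT : TestFn ε (datum ε)) : ε ^ 2 / 64 ≤ ∫ p, datum ε p ^ 2 := by
  have hε := hT.pos
  set S : Set (ℝ × ℝ) := Set.Icc (-(ε / 4)) (ε / 4) ×ˢ
    Set.Icc (3 * ε - ε / 4) (3 * ε + ε / 4) with hS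
  have hSm : MeasurableSet S := measurableSet_Icc.prod measurableSet_Icc
  have hvol : (volume S).toReal = ε ^ 2 / 4 := by
    rw [hS, Measure.volume_eq_prod, Measure.prod_prod, Real.volume_Icc, Real.volume_Icc,
      ENNReal.toReal_mul, ENNReal.toReal_ofReal (by linarith),
      ENNReal.toReal_ofReal (by linarith)]
    ring
  have hvt : volume S ≠ ⊤ := by
    rw [hS, Measure.volume_eq_prod, Measure.prod_prod, Real.volume_Icc, Real.volume_Icc]
    exact ENNReal.mul_ne_top ENNReal.ofReal_ne_top ENNReal.ofReal_ne_top
  have hlow : ∀ p ∈ S, 1 / 4 ≤ datum ε p := by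
    rintro p ⟨⟨hx1, hx2⟩, hy1, hy2⟩
    have hr1 : 3 * ε - ε / 4 ≤ √(rsq p) := by
      have := abs_snd_le_sqrt_rsq p
      have := le_abs_self p.2
      linarith
    have hr2 : √(rsq p) ≤ 3 * ε + ε / 2 := by
      apply Real.sqrt_le_iff.2 ⟨by linarith, ?_⟩
      unfold rsq; nlinarith
    have hr0 : 0 < √(rsq p) := by linarith
    have h1 : 1 / 2 ≤ tentLine ε (√(rsq p) - 3 * ε) := by
      rw [tentLine_eq_max hε]
      refine le_max_of_le_right ?_
      have : |√(rsq p) - 3 * ε| / ε ≤ 1 / 2 := by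
        rw [div_le_iff₀ hε, abs_le]; constructor <;> linarith
      linarith
    have h2 : 1 / 2 ≤ p.2 / √(rsq p) := by
      rw [le_div_iff₀ hr0]; linarith
    unfold datum
    nlinarith
  have hi : Integrable (fun p => datum ε p ^ 2) :=
    hT.rd.sq.integrable (hT.cont.measurable.pow_const 2)
  calc ε ^ 2 / 64 = ∫ p in S, (1 / 16 : ℝ) := by
        rw [setIntegral_const, Measure.real, hvol, smul_eq_mul]; ring
    _ ≤ ∫ p in S, datum ε p ^ 2 := by
        refine setIntegral_mono_on (integrableOn_const hvt) hi.integrableOn hSm fun p hp => ?_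
        nlinarith [hlow p hp]
    _ ≤ ∫ p, datum ε p ^ 2 :=
        setIntegral_le_integral hi (Eventually.of_forall fun p => sq_nonneg _)

/-! ### Time slices of a solution -/

/-- The value of `ρ(t)` as a function on the plane; `slx`, `sly`, `slxx`, `slyy` are its
derivatives. -/
def sl (ρ : ℝ → ℝ → ℝ → ℝ) (t : ℝ) (p : ℝ × ℝ) : ℝ := ρ t p.1 p.2
/-- `∂ₓρ(t)`. -/
def slx (ρ : ℝ → ℝ → ℝ → ℝ) (t : ℝ) (p : ℝ × ℝ) : ℝ := deriv (fun a => ρ t a p.2) p.1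
/-- `∂ᵧρ(t)`. -/
def sly (ρ : ℝ → ℝ → ℝ → ℝ) (t : ℝ) (p : ℝ × ℝ) : ℝ := deriv (fun b => ρ t p.1 b) p.2
/-- `∂ₓₓρ(t)`. -/
def slxx (ρ : ℝ → ℝ → ℝ → ℝ) (t : ℝ) (p : ℝ × ℝ) : ℝ :=
  deriv (fun a => deriv (fun b => ρ t b p.2) a) p.1
/-- `∂ᵧᵧρ(t)`. -/
def slyy (ρ : ℝ → ℝ → ℝ → ℝ) (t : ℝ) (p : ℝ × ℝ) : ℝ :=
  deriv (fun b => deriv (fun c => ρ t p.1 c) b) p.2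

section Solution

variable {q κ : ℝ} {ρ : ℝ → ℝ → ℝ → ℝ}

lemma rd_of_hasRapidDecay {f : ℝ → ℝ → ℝ} (h : HasRapidDecay f) : RD (fun p => f p.1 p.2) := by
  intro k
  obtain ⟨C, hC⟩ := h k
  refine ⟨C, fun p => ?_⟩
  have := hC p.1 p.2
  rwa [add_assoc] at this

lemma dirD_x {f f' : ℝ × ℝ → ℝ} (h : ∀ p : ℝ × ℝ, HasDerivAt (fun a => f (a, p.2)) (f' p) p.1) :
    DirD (1, 0) f f' := by
  intro p
  have h1 : HasDerivAt (fun a => f (a, p.2)) (f' p) (p.1 + 0) := by simpa using h p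
  have h2 := h1.comp_const_add p.1 0
  have e : (fun t : ℝ => f (p + t • ((1, 0) : ℝ × ℝ))) = fun t => f (p.1 + t, p.2) := by
    funext t; congr 1; ext <;> simp
  rw [HasLineDerivAt, e]
  exact h2

lemma dirD_y {f f' : ℝ × ℝ → ℝ} (h : ∀ p : ℝ × ℝ, HasDerivAt (fun b => f (p.1, b)) (f' p) p.2) :
    DirD (0, 1) f f' := by
  intro p
  have h1 : HasDerivAt (fun b => f (p.1, b)) (f' p) (p.2 + 0) := by simpa using h p
  have h2 := h1.comp_const_add p.2 0
  have e : (fun t : ℝ => f (p + t • ((0, 1) : ℝ × ℝ))) = fun t => f (p.1, p.2 + t) := by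
    funext t; congr 1; ext <;> simp
  rw [HasLineDerivAt, e]
  exact h2

/-- Joint continuity up to `t = 0`, after freezing time at `0` for negative times. -/
lemma continuous_max (h : IsCircularSolution q κ ρ) :
    Continuous (fun z : ℝ × ℝ × ℝ => ρ (max z.1 0) z.2.1 z.2.2) :=
  h.cont.comp_continuous (f := fun z : ℝ × ℝ × ℝ => (max z.1 0, z.2.1, z.2.2)) (by fun_prop)
    (fun z => le_max_right z.1 0)

lemma continuous_sl (h : IsCircularSolution q κ ρ) {t : ℝ} (ht : 0 ≤ t) : Continuous (sl ρ t) :=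
  h.cont.comp_continuous (f := fun p : ℝ × ℝ => (t, p.1, p.2)) (by fun_prop) (fun _ => ht)

lemma measurable_slx_max (h : IsCircularSolution q κ ρ) :
    Measurable (fun z : ℝ × ℝ × ℝ => slx ρ (max z.1 0) z.2) := by
  have h1 : Continuous (Function.uncurry
      (fun (c : ℝ × ℝ) (a : ℝ) => ρ (max c.1 0) a c.2)) :=
    (continuous_max h).comp
      (g := fun z : ℝ × ℝ × ℝ => ρ (max z.1 0) z.2.1 z.2.2)
      (f := fun w : (ℝ × ℝ) × ℝ => (w.1.1, w.2, w.1.2)) (by fun_prop)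
  exact (measurable_deriv_with_param h1).comp
    (f := fun z : ℝ × ℝ × ℝ => ((z.1, z.2.2), z.2.1)) (by fun_prop)

lemma measurable_sly_max (h : IsCircularSolution q κ ρ) :
    Measurable (fun z : ℝ × ℝ × ℝ => sly ρ (max z.1 0) z.2) := by
  have h1 : Continuous (Function.uncurry
      (fun (c : ℝ × ℝ) (b : ℝ) => ρ (max c.1 0) c.2 b)) :=
    (continuous_max h).comp
      (g := fun z : ℝ × ℝ × ℝ => ρ (max z.1 0) z.2.1 z.2.2)
      (f := fun w : (ℝ × ℝ) × ℝ => (w.1.1, w.1.2, w.2)) (by fun_prop)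
  exact (measurable_deriv_with_param h1).comp
    (f := fun z : ℝ × ℝ × ℝ => ((z.1, z.2.1), z.2.2)) (by fun_prop)

lemma slice (h : IsCircularSolution q κ ρ) {t : ℝ} (ht : 0 < t) :
    Slice (sl ρ t) (slx ρ t) (sly ρ t) (slxx ρ t) (slyy ρ t) where
  mu := (continuous_sl h ht.le).measurable
  mx := by
    have := (measurable_slx_max h).comp (f := fun p : ℝ × ℝ => (t, p)) (by fun_prop)
    simpa only [Function.comp_def, max_eq_left ht.le] using this
  my := by
    have := (measurable_sly_max h).comp (f := fun p : ℝ × ℝ => (t, p)) (by fun_prop)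
    simpa only [Function.comp_def, max_eq_left ht.le] using this
  mxx := (h.cont_dxx.comp_continuous (f := fun p : ℝ × ℝ => (t, p.1, p.2)) (by fun_prop)
    (fun _ => ht)).measurable
  myy := (h.cont_dyy.comp_continuous (f := fun p : ℝ × ℝ => (t, p.1, p.2)) (by fun_prop)
    (fun _ => ht)).measurable
  dx := dirD_x fun p => (h.diff_x t ht p.1 p.2).hasDerivAt
  dy := dirD_y fun p => (h.diff_y t ht p.1 p.2).hasDerivAt
  dxx := dirD_x fun p => (h.diff_xx t ht p.1 p.2).hasDerivAt
  dyy := dirD_y fun p => (h.diff_yy t ht p.1 p.2).hasDerivAt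
  ru := rd_of_hasRapidDecay (h.decay t ht.le)
  rx := rd_of_hasRapidDecay (h.decay_dx t ht)
  ry := rd_of_hasRapidDecay (h.decay_dy t ht)
  rxx := rd_of_hasRapidDecay (h.decay_dxx t ht)
  ryy := rd_of_hasRapidDecay (h.decay_dyy t ht)

/-! ### The far-field error in time -/

/-- The far-field error at time `t`. -/
def farErr (ρ : ℝ → ℝ → ℝ → ℝ) (n : ℕ) (t : ℝ) : ℝ :=
  ∫ p, far n p * jden (sl ρ t) (slx ρ t) (sly ρ t) p

lemma farErr_nonneg (n : ℕ) (t : ℝ) : 0 ≤ farErr ρ n t :=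
  integral_nonneg fun p => mul_nonneg (far_nonneg n p) (jden_nonneg p)

lemma measurable_farErr_max (h : IsCircularSolution q κ ρ) (n : ℕ) :
    StronglyMeasurable (fun t => farErr ρ n (max t 0)) := by
  have h1 : Measurable (fun z : ℝ × ℝ × ℝ =>
      far n z.2 * jden (sl ρ (max z.1 0)) (slx ρ (max z.1 0)) (sly ρ (max z.1 0)) z.2) := by
    have a := (continuous_max h).measurable
    have b := measurable_slx_max h
    have c := measurable_sly_max h
    have d : Measurable (fun z : ℝ × ℝ × ℝ => far n z.2) :=
      (measurable_far n).comp measurable_snd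
    have e : Measurable (fun z : ℝ × ℝ × ℝ => wt z.2) :=
      continuous_wt.measurable.comp measurable_snd
    unfold jden
    exact d.mul ((((b.pow_const 2).add (c.pow_const 2)).const_mul 3).add
      ((e.mul (a.pow_const 2)).const_mul 1024))
  exact h1.stronglyMeasurable.integral_prod_right'

lemma aestronglyMeasurable_farErr (h : IsCircularSolution q κ ρ) (n : ℕ) (T : ℝ) :
    AEStronglyMeasurable (farErr ρ n) (volume.restrict (Set.Ioc 0 T)) := by
  refine (measurable_farErr_max h n).aestronglyMeasurable.congr ?_
  filter_upwards [ae_restrict_mem measurableSet_Ioc] with t ht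
  rw [max_eq_left ht.1.le]

lemma tendsto_farErr (h : IsCircularSolution q κ ρ) {t : ℝ} (ht : 0 < t) :
    Tendsto (fun n => farErr ρ n t) atTop (nhds 0) := by
  have hs := slice h ht
  have := tendsto_integral_of_dominated_convergence (μ := volume)
    (F := fun n p => far n p * jden (sl ρ t) (slx ρ t) (sly ρ t) p) (f := fun _ => (0 : ℝ))
    (jden (sl ρ t) (slx ρ t) (sly ρ t)) (fun n => (hs.jden_far_int n).aestronglyMeasurable)
    hs.jden_int (fun n => Eventually.of_forall fun p => ?_) (Eventually.of_forall fun p => ?_)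
  · simpa [farErr] using this
  · have h0 := jden_nonneg (u := sl ρ t) (ux := slx ρ t) (uy := sly ρ t) p
    rw [Real.norm_eq_abs, abs_of_nonneg (mul_nonneg (far_nonneg n p) h0)]
    exact mul_le_of_le_one_left h0 (far_le_one n p)
  · obtain ⟨N, hN⟩ := exists_nat_gt (ell p)
    refine tendsto_const_nhds.congr' ?_
    filter_upwards [eventually_ge_atTop N] with n hn
    have : (N : ℝ) ≤ n := by exact_mod_cast hn
    rw [far, if_neg (by linarith), zero_mul]

lemma gradPlaneNormSq_eq (t : ℝ) :
    gradPlaneNormSq ρ t = ∫ p, (slx ρ t p ^ 2 + sly ρ t p ^ 2) := rfl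

/-- A bound on the far-field error that is uniform in `n` and integrable in time whenever the
dissipation is. -/
lemma farErr_le (h : IsCircularSolution q κ ρ) (T : ℝ) :
    ∃ M : ℝ, ∀ n, ∀ t ∈ Set.Ioc 0 T, farErr ρ n t ≤ 4099 * gradPlaneNormSq ρ t + M := by
  have hK : IsCompact (Set.Icc (0 : ℝ) T ×ˢ (Set.Icc (-3 : ℝ) 3 ×ˢ Set.Icc (-3 : ℝ) 3)) :=
    isCompact_Icc.prod (isCompact_Icc.prod isCompact_Icc)
  obtain ⟨B, hB⟩ := hK.exists_bound_of_continuousOn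
    (h.cont.mono (fun z hz => hz.1.1))
  refine ⟨1024 * (6 * (B ^ 2 * (volume (Set.Icc (-3 : ℝ) 3 ×ˢ Set.Icc (-3 : ℝ) 3)).toReal)),
    fun n t ht => ?_⟩
  have hs := slice h ht.1
  have hfar : farErr ρ n t ≤ ∫ p, jden (sl ρ t) (slx ρ t) (sly ρ t) p :=
    integral_mono (hs.jden_far_int n) hs.jden_int fun p =>
      mul_le_of_le_one_left (jden_nonneg p) (far_le_one n p)
  have hj : ∫ p, jden (sl ρ t) (slx ρ t) (sly ρ t) p
      = 3 * gradPlaneNormSq ρ t + 1024 * ∫ p, wt p * sl ρ t p ^ 2 := by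
    unfold jden
    rw [integral_add (hs.grad_int.const_mul 3)
      ((hs.usq_int pg_wt continuous_wt.measurable).const_mul 1024), integral_const_mul,
      integral_const_mul, gradPlaneNormSq_eq]
  have hn : ∫ p, near p * sl ρ t p ^ 2
      ≤ B ^ 2 * (volume (Set.Icc (-3 : ℝ) 3 ×ˢ Set.Icc (-3 : ℝ) 3)).toReal := by
    set S : Set (ℝ × ℝ) := Set.Icc (-3 : ℝ) 3 ×ˢ Set.Icc (-3 : ℝ) 3 with hS
    have hSm : MeasurableSet S := measurableSet_Icc.prod measurableSet_Icc
    have hSt : volume S ≠ ⊤ := (isCompact_Icc.prod isCompact_Icc).measure_ne_top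
    calc ∫ p, near p * sl ρ t p ^ 2 ≤ ∫ p, S.indicator (fun _ => B ^ 2) p := by
          refine integral_mono_of_nonneg (Eventually.of_forall fun p => ?_)
            ((integrable_indicator_iff hSm).2 (integrableOn_const hSt))
            (Eventually.of_forall fun p => ?_)
          · have : 0 ≤ near p := by unfold near; split_ifs <;> norm_num
            exact mul_nonneg this (sq_nonneg _)
          · by_cases hp : rsq p ≤ 9
            · have hpS : p ∈ S := by
                unfold rsq at hp
                refine ⟨abs_le.1 (abs_le_of_sq_le_sq ?_ (by norm_num)),
                  abs_le.1 (abs_le_of_sq_le_sq ?_ (by norm_num))⟩ <;>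
                nlinarith [sq_nonneg p.1, sq_nonneg p.2]
              have hb := hB (t, p.1, p.2) ⟨⟨ht.1.le, ht.2⟩, hpS⟩
              simp only [near, if_pos hp, one_mul, Set.indicator_of_mem hpS]
              rw [← sq_abs (sl ρ t p)]
              exact pow_le_pow_left₀ (abs_nonneg _) hb 2
            · simp only [near, if_neg hp, zero_mul]
              exact Set.indicator_nonneg (fun _ _ => sq_nonneg B) p
      _ = B ^ 2 * (volume S).toReal := by
          rw [integral_indicator hSm, setIntegral_const, smul_eq_mul, mul_comm, Measure.real]
  have hh := hs.hardy
  rw [← gradPlaneNormSq_eq] at hh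
  linarith

/-- If the dissipation is integrable in time, the far-field error vanishes in the limit. -/
lemma tendsto_integral_farErr (h : IsCircularSolution q κ ρ) {T : ℝ} (hT : 0 ≤ T)
    (hG : IntervalIntegrable (gradPlaneNormSq ρ) volume 0 T) :
    (∀ n, IntervalIntegrable (farErr ρ n) volume 0 T) ∧
      Tendsto (fun n => ∫ t in (0 : ℝ)..T, farErr ρ n t) atTop (nhds 0) := by
  obtain ⟨M, hM⟩ := farErr_le h T
  have hb : IntervalIntegrable (fun t => 4099 * gradPlaneNormSq ρ t + M) volume 0 T :=
    (hG.const_mul 4099).add intervalIntegrable_const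
  have hn : ∀ n, ∀ t ∈ Set.uIoc 0 T, ‖farErr ρ n t‖ ≤ 4099 * gradPlaneNormSq ρ t + M := by
    intro n t ht
    rw [Set.uIoc_of_le hT] at ht
    rw [Real.norm_eq_abs, abs_of_nonneg (farErr_nonneg n t)]
    exact hM n t ht
  have hm : ∀ n, AEStronglyMeasurable (farErr ρ n) (volume.restrict (Set.uIoc 0 T)) := fun n => by
    rw [Set.uIoc_of_le hT]; exact aestronglyMeasurable_farErr h n T
  constructor
  · intro n
    refine hb.mono_fun' (hm n) ?_
    filter_upwards [ae_restrict_mem measurableSet_uIoc] with t ht using hn n t ht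
  · have := intervalIntegral.tendsto_integral_filter_of_dominated_convergence (μ := volume)
      (a := 0) (b := T) (l := atTop) (F := fun n t => farErr ρ n t) (f := fun _ => (0 : ℝ)) _
      (Eventually.of_forall hm)
      (Eventually.of_forall fun n => Eventually.of_forall (hn n)) hb
      (Eventually.of_forall fun t ht => tendsto_farErr h
        (by rw [Set.uIoc_of_le hT] at ht; exact ht.1))
    simpa using this

/-! ### The energy inequality in time -/

/-- A square containing the support of `chi n`. -/
def csq (n : ℕ) : Set (ℝ × ℝ) :=
  Set.Icc (-Real.exp (2 * n)) (Real.exp (2 * n)) ×ˢ Set.Icc (-Real.exp (2 * n)) (Real.exp (2 * n))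

lemma isCompact_csq (n : ℕ) : IsCompact (csq n) := isCompact_Icc.prod isCompact_Icc

lemma chi_eq_zero_of_notMem {n : ℕ} (hn : 1 ≤ n) {p : ℝ × ℝ} (hp : p ∉ csq n) :
    chi n p = 0 := by
  apply chi_eq_zero hn
  by_contra! hlt
  apply hp
  have h0 := rsq_nonneg p
  have h1 : 1 + rsq p < Real.exp (2 * n) := by
    rwa [ell, Real.log_lt_iff_lt_exp (by linarith)] at hlt
  have h2 : (1 : ℝ) ≤ Real.exp (2 * n) := by linarith
  unfold rsq at h1
  refine ⟨abs_le.1 (abs_le_of_sq_le_sq ?_ (by linarith)),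
    abs_le.1 (abs_le_of_sq_le_sq ?_ (by linarith))⟩ <;>
  nlinarith [sq_nonneg p.1, sq_nonneg p.2]

/-- `∂ₜρ(t)`. -/
def slt (ρ : ℝ → ℝ → ℝ → ℝ) (t : ℝ) (p : ℝ × ℝ) : ℝ := deriv (fun s => ρ s p.1 p.2) t

/-- The squared distance to the initial datum, localized by the cutoff. -/
def dist2 (ρ : ℝ → ℝ → ℝ → ℝ) (n : ℕ) (t : ℝ) : ℝ :=
  ∫ p, (sl ρ t p - sl ρ 0 p) ^ 2 * chi n p

lemma continuousOn_dist2 (h : IsCircularSolution q κ ρ) {n : ℕ} (hn : 1 ≤ n) (T : ℝ) :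
    ContinuousOn (dist2 ρ n) (Set.Icc 0 T) := by
  refine continuousOn_integral_of_compact_support (isCompact_csq n) ?_ ?_
  · have h1 : ContinuousOn (fun z : ℝ × ℝ × ℝ => sl ρ z.1 z.2) (Set.Icc 0 T ×ˢ univ) :=
      h.cont.mono fun z hz => hz.1.1
    have h2 : Continuous (fun z : ℝ × ℝ × ℝ => sl ρ 0 z.2) :=
      (continuous_sl h le_rfl).comp continuous_snd
    have h3 : Continuous (fun z : ℝ × ℝ × ℝ => chi n z.2) :=
      (continuous_chi n).comp continuous_snd
    exact ((h1.sub h2.continuousOn).pow 2).mul h3.continuousOn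
  · intro t p _ hp
    simp only [chi_eq_zero_of_notMem hn hp, mul_zero]

lemma hasDerivAt_dist2 (h : IsCircularSolution q κ ρ) {n : ℕ} (hn : 1 ≤ n) {t : ℝ} (ht : 0 < t) :
    HasDerivAt (dist2 ρ n) (∫ p, 2 * (sl ρ t p - sl ρ 0 p) * slt ρ t p * chi n p) t := by
  have hc0 := continuous_sl h le_rfl
  have hpos : ∀ s ∈ Set.Icc (t / 2) (2 * t), 0 < s := fun s hs => by linarith [hs.1]
  have hct : ContinuousOn
      (fun z : ℝ × ℝ × ℝ => 2 * (sl ρ z.1 z.2 - sl ρ 0 z.2) * slt ρ z.1 z.2 * chi n z.2)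
      {z | 0 < z.1} := by
    have h1 : ContinuousOn (fun z : ℝ × ℝ × ℝ => sl ρ z.1 z.2) {z | 0 < z.1} :=
      h.cont.mono fun z (hz : 0 < z.1) => hz.le
    have h2 : Continuous (fun z : ℝ × ℝ × ℝ => sl ρ 0 z.2) := hc0.comp continuous_snd
    have h3 : Continuous (fun z : ℝ × ℝ × ℝ => chi n z.2) :=
      (continuous_chi n).comp continuous_snd
    have h4 : ContinuousOn (fun z : ℝ × ℝ × ℝ => slt ρ z.1 z.2) {z | 0 < z.1} := h.cont_dt
    exact ((continuousOn_const.mul (h1.sub h2.continuousOn)).mul h4).mul h3.continuousOn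
  obtain ⟨M, hM⟩ := (isCompact_Icc.prod (isCompact_csq n)).exists_bound_of_continuousOn
    (hct.mono (t := Set.Icc (t / 2) (2 * t) ×ˢ csq n) fun z hz => hpos z.1 hz.1)
  have hcF : ∀ s, 0 < s → Continuous (fun p => (sl ρ s p - sl ρ 0 p) ^ 2 * chi n p) :=
    fun s hs => by
      have := continuous_sl h hs.le
      fun_prop
  have hcF' : Continuous (fun p => 2 * (sl ρ t p - sl ρ 0 p) * slt ρ t p * chi n p) :=
    hct.comp_continuous (f := fun p : ℝ × ℝ => (t, p)) (by fun_prop) (fun _ => ht)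
  refine (hasDerivAt_integral_of_dominated_loc_of_deriv_le (μ := volume)
    (F := fun s p => (sl ρ s p - sl ρ 0 p) ^ 2 * chi n p)
    (F' := fun s p => 2 * (sl ρ s p - sl ρ 0 p) * slt ρ s p * chi n p)
    (s := Set.Icc (t / 2) (2 * t)) (bound := (csq n).indicator fun _ => M)
    (Icc_mem_nhds (by linarith) (by linarith)) ?_ ?_ hcF'.aestronglyMeasurable ?_ ?_ ?_).2
  · filter_upwards [Icc_mem_nhds (by linarith : t / 2 < t) (by linarith : t < 2 * t)] with s hs
    exact (hcF s (hpos s hs)).aestronglyMeasurable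
  · exact (hcF t ht).integrable_of_hasCompactSupport
      (HasCompactSupport.intro (isCompact_csq n) fun p hp => by
        simp only [chi_eq_zero_of_notMem hn hp, mul_zero])
  · refine Eventually.of_forall fun p s hs => ?_
    by_cases hp : p ∈ csq n
    · rw [Set.indicator_of_mem hp]
      exact hM (s, p) ⟨hs, hp⟩
    · rw [Set.indicator_of_notMem hp, chi_eq_zero_of_notMem hn hp, mul_zero, norm_zero]
  · exact (integrable_indicator_iff (isCompact_csq n).measurableSet).2
      (integrableOn_const (isCompact_csq n).measure_ne_top)
  · refine Eventually.of_forall fun p s hs => ?_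
    have h1 : HasDerivAt (fun s => sl ρ s p) (slt ρ s p) s :=
      (h.diff_t s (hpos s hs) p.1 p.2).hasDerivAt
    have h2 := ((h1.sub_const (sl ρ 0 p)).pow 2).mul_const (chi n p)
    exact h2.congr_deriv (by push_cast; ring)

/-- The energy inequality on `[0, T]` with the far-field error still present. -/
lemma energy_step (h : IsCircularSolution q κ ρ) (hq : 1 ≤ q) (hκ : 0 < κ) {ε : ℝ}
    (hf : TestFn ε (sl ρ 0)) {T : ℝ} (hT : 0 ≤ T)
    (hG : IntervalIntegrable (gradPlaneNormSq ρ) volume 0 T) {n : ℕ} (hn : 16 ≤ n) :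
    κ * (∫ t in (0 : ℝ)..T, gradPlaneNormSq ρ t)
      ≤ (2 * ((16 * ε ^ 2) ^ (q + 1) / κ) * l2planeSq ρ 0 + 1600 * κ) * T
        + κ * ∫ t in (0 : ℝ)..T, farErr ρ n t := by
  have hn1 : 1 ≤ n := by omega
  have hJ := (tendsto_integral_farErr h hT hG).1 n
  set K := 2 * ((16 * ε ^ 2) ^ (q + 1) / κ) * l2planeSq ρ 0 + 1600 * κ with hK
  have i1 : IntervalIntegrable (fun t => -κ * gradPlaneNormSq ρ t) volume 0 T := hG.const_mul _
  have i2 : IntervalIntegrable (fun _ : ℝ => K) volume 0 T := intervalIntegrable_const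
  have i3 : IntervalIntegrable (fun t => κ * farErr ρ n t) volume 0 T := hJ.const_mul _
  have key := intervalIntegral.sub_le_integral_of_hasDeriv_right_of_le (g := dist2 ρ n)
    (g' := fun t => ∫ p, 2 * (sl ρ t p - sl ρ 0 p) * slt ρ t p * chi n p)
    (φ := fun t => -κ * gradPlaneNormSq ρ t + K + κ * farErr ρ n t) hT
    (continuousOn_dist2 h hn1 T)
    (fun t ht => (hasDerivAt_dist2 h hn1 ht.1).hasDerivWithinAt)
    ((intervalIntegrable_iff_integrableOn_Icc_of_le hT).1 ((i1.add i2).add i3))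
    (fun t ht => by
      refine le_trans (le_of_eq ?_) ((slice h ht.1).energy hf hq hκ hn)
      refine integral_congr_ae (Eventually.of_forall fun p => ?_)
      have := h.pde t ht.1 p.1 p.2
      have e : slt ρ t p = κ * (slxx ρ t p + slyy ρ t p)
          - rsq p ^ (q / 2) * (-p.2 * slx ρ t p + p.1 * sly ρ t p) := by
        simp only [slt, slxx, slyy, slx, sly, rsq]
        linarith
      simp only [e])
  have d0 : dist2 ρ n 0 = 0 := by simp [dist2]
  have dT : 0 ≤ dist2 ρ n T :=
    integral_nonneg fun p => mul_nonneg (sq_nonneg _) (chi_nonneg n p)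
  rw [intervalIntegral.integral_add (i1.add i2) i3, intervalIntegral.integral_add i1 i2,
    intervalIntegral.integral_const_mul, intervalIntegral.integral_const_mul,
    intervalIntegral.integral_const, smul_eq_mul, d0] at key
  linarith

lemma energy_bound (h : IsCircularSolution q κ ρ) (hq : 1 ≤ q) (hκ : 0 < κ) {ε : ℝ}
    (hf : TestFn ε (sl ρ 0)) {T : ℝ} (hT : 0 ≤ T)
    (hG : IntervalIntegrable (gradPlaneNormSq ρ) volume 0 T) :
    κ * (∫ t in (0 : ℝ)..T, gradPlaneNormSq ρ t)
      ≤ (2 * ((16 * ε ^ 2) ^ (q + 1) / κ) * l2planeSq ρ 0 + 1600 * κ) * T := by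
  have h1 := (((tendsto_integral_farErr h hT hG).2.const_mul κ).const_add
    ((2 * ((16 * ε ^ 2) ^ (q + 1) / κ) * l2planeSq ρ 0 + 1600 * κ) * T))
  rw [mul_zero, add_zero] at h1
  refine ge_of_tendsto h1 ?_
  filter_upwards [eventually_ge_atTop 16] with n hn
  exact energy_step h hq hκ hf hT hG hn

end Solution

/-- With `κ = ε^{q+2}`, both constants in the energy bound are multiples of `ε^q ‖ρ₀‖²`. -/
lemma constant_bound {q κ ε N : ℝ} (hε : 0 < ε) (hκε : κ = ε ^ (q + 2))
    (hN : ε ^ 2 / 64 ≤ N) :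
    2 * ((16 * ε ^ 2) ^ (q + 1) / κ) * N + 1600 * κ
      ≤ (2 * 16 ^ (q + 1) + 102400) * N * ε ^ q := by
  have hεq : 0 < ε ^ q := Real.rpow_pos_of_pos hε q
  have hκ2 : κ = ε ^ q * ε ^ 2 := by
    rw [hκε, Real.rpow_add hε, ← Real.rpow_natCast ε 2]; norm_cast
  have e1 : (16 * ε ^ 2) ^ (q + 1) / κ = 16 ^ (q + 1) * ε ^ q := by
    rw [Real.mul_rpow (by norm_num) (by positivity), ← Real.rpow_natCast ε 2, ← Real.rpow_mul hε.le,
      hκε, mul_div_assoc, ← Real.rpow_sub hε]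
    congr 2; push_cast; ring
  rw [e1]
  have e2 : 1600 * κ ≤ 102400 * N * ε ^ q := by
    rw [hκ2]; nlinarith
  linarith

end CircularFlow

/-- Dissipation upper bound for the circular flow
`(x²+y²)^{q/2}(-y,x)`, `q ≥ 1`, with initial datum
`ρ₀(x,y) = φ(√(x²+y²) - 3κ^β) · y/√(x²+y²)`, `β = 1/(q+2)`, valid for
`0 ≤ t < κ^{-q/(q+2)}/4`. -/
theorem dissipation_bound_circular (q : ℝ) (hq : 1 ≤ q) :
    ∃ C : ℝ, 1 ≤ C ∧ ∀ κ ∈ Set.Ioo (0:ℝ) 1, ∀ ρ : ℝ → ℝ → ℝ → ℝ,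
      IsCircularSolution q κ ρ →
      (∀ x y : ℝ, ρ 0 x y =
        tentLine (κ ^ ((1:ℝ) / (q + 2))) (Real.sqrt (x ^ 2 + y ^ 2) - 3 * κ ^ ((1:ℝ) / (q + 2)))
          * (y / Real.sqrt (x ^ 2 + y ^ 2))) →
      ∀ t : ℝ, 0 ≤ t → t < κ ^ (-(q / (q + 2))) / 4 →
        κ * ∫ s in (0:ℝ)..t, gradPlaneNormSq ρ s ≤
          C * l2planeSq ρ 0 *
            (Real.sqrt (κ ^ (q / (q + 2)) * t) +
              κ ^ (q / (q + 2)) * t *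
                |Real.log ((25 - 4 * κ ^ (q / (q + 2)) * t) / (1 - 4 * κ ^ (q / (q + 2)) * t))| +
              |Real.log (1 - 4 * κ ^ (q / (q + 2)) * t / 25)|) := by
  refine ⟨2 * 16 ^ (q + 1) + 102400, ?_, ?_⟩
  · have : (0 : ℝ) ≤ 16 ^ (q + 1) := by positivity
    linarith
  intro κ hκ ρ h h0 T hT hT4
  have hκ0 : 0 < κ := hκ.1
  have hq2 : q + 2 ≠ 0 := by linarith
  set ε := κ ^ ((1:ℝ) / (q + 2)) with hε
  have hε0 : 0 < ε := Real.rpow_pos_of_pos hκ0 _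
  have hε1 : ε ≤ 1 := Real.rpow_le_one hκ0.le hκ.2.le (by
    have : 0 < q + 2 := by linarith
    positivity)
  have hκε : κ = ε ^ (q + 2) := by
    rw [hε, ← Real.rpow_mul hκ0.le, one_div_mul_cancel hq2, Real.rpow_one]
  have hεq : κ ^ (q / (q + 2)) = ε ^ q := by
    rw [hε, ← Real.rpow_mul hκ0.le]; congr 1; ring
  have hdat : CircularFlow.sl ρ 0 = CircularFlow.datum ε := by
    funext p
    exact h0 p.1 p.2
  have hf : CircularFlow.TestFn ε (CircularFlow.datum ε) :=
    CircularFlow.testFn_datum hε0 hε1 (hdat ▸ CircularFlow.continuous_sl h le_rfl)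
  have hN : ε ^ 2 / 64 ≤ l2planeSq ρ 0 := by
    have := CircularFlow.datum_l2_lower hf
    rw [← hdat] at this
    exact this
  have hN0 : 0 ≤ l2planeSq ρ 0 := le_trans (by positivity) hN
  rw [Real.rpow_neg hκ0.le] at hT4
  rw [hεq] at hT4 ⊢
  have hp : 0 < ε ^ q := Real.rpow_pos_of_pos hε0 q
  set τ := ε ^ q * T with hτ
  have hτ0 : 0 ≤ τ := by positivity
  have hτ1 : τ ≤ 1 := by
    have h2 : τ < ε ^ q * ((ε ^ q)⁻¹ / 4) := by rw [hτ]; gcongr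
    have e : ε ^ q * ((ε ^ q)⁻¹ / 4) = 1 / 4 := by field_simp
    linarith
  have hτs : τ ≤ √τ := Real.le_sqrt_of_sq_le (by nlinarith)
  have hC : (0 : ℝ) ≤ 2 * 16 ^ (q + 1) + 102400 := by positivity
  have hmain : κ * ∫ s in (0:ℝ)..T, gradPlaneNormSq ρ s
      ≤ (2 * 16 ^ (q + 1) + 102400) * l2planeSq ρ 0 * τ := by
    by_cases hG : IntervalIntegrable (gradPlaneNormSq ρ) volume 0 T
    · refine (CircularFlow.energy_bound h hq hκ0 (hdat ▸ hf) hT hG).trans ?_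
      have := mul_le_mul_of_nonneg_right
        (CircularFlow.constant_bound hε0 hκε hN) hT
      linarith
    · -- a dissipation that is not integrable in time has integral `0` by convention
      rw [intervalIntegral.integral_undef hG, mul_zero]
      positivity
  refine hmain.trans ?_
  gcongr
  rw [add_assoc]
  exact hτs.trans (le_add_of_nonneg_right (by positivity))

end
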